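/- arXiv:1211.1353 — 2 statements merged into one kernel-verified Lean document; each statement's English description precedes it below -/
import Mathlib

section
/- For a number field F of degree f over ℚ and any real Y > 1, the number of integral ideals of the ring of integers of F with absolute norm less than Y is at most e·Y·(1 + log Y)^f. -/
open NumberField

/-!
At most `f = [F : ℚ]` primes of `𝒪_F` lie over each rational prime, so the nonzero primes `P` can
be coloured with `f` colours in such a way that `P` is determined by its colour and the rational
prime `p_P` below it. Sending `I = ∏ P ^ v_P` to the tuple whose entry at a colour `i` is the
product of the `p_P ^ v_P` over the primes `P` of colour `i` then loses no information, by unique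
factorization in `ℕ`, and the product of the entries divides the norm of `I`. It remains to count
`f`-tuples `n` of positive integers with product at most `Y`; there are at most
`∑ Y / (n_1 ⋯ n_f) ≤ Y (∑_{m ≤ Y} 1 / m) ^ f ≤ Y (1 + log Y) ^ f` of them.
-/

section FiberProducts

variable {α β κ M : Type*}

theorem exists_fin_injective_prodMk_of_encard_fiber_le (q : α → β) {n : ℕ}
    (hq : ∀ b, (q ⁻¹' {b}).encard ≤ n) :
    ∃ c : α → Fin n, Function.Injective fun a ↦ (c a, q a) := by
  have fiber_embedding (b : β) : Nonempty (q ⁻¹' {b} ↪ Fin n) := by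
    obtain ⟨hfin, hcard⟩ := Set.encard_le_coe_iff_finite_ncard_le.mp (hq b)
    have := hfin.fintype
    exact Function.Embedding.nonempty_of_card_le (by
      rwa [Fintype.card_fin, ← Nat.card_eq_fintype_card])
  let e (b : β) : q ⁻¹' {b} ↪ Fin n := (fiber_embedding b).some
  refine ⟨fun a ↦ e (q a) ⟨a, rfl⟩, fun a a' h ↦ ?_⟩
  obtain ⟨hc, hb⟩ := Prod.ext_iff.mp h
  have transport {b : β} (hb : q a = b) : e (q a) ⟨a, rfl⟩ = e b ⟨a, hb⟩ := by subst hb; rfl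
  exact congrArg Subtype.val ((e (q a')).injective ((transport hb).symm.trans hc))

variable [DecidableEq κ]

/-- The tuple of partial products `∏_{a ∈ s, c a = i} q a`, one for each colour `i`, of the
weights `q` over a multiset `s` whose elements are coloured by `c`. -/
def fiberProd [CommMonoid M] (c : α → κ) (q : α → M) (s : Multiset α) (i : κ) : M :=
  ((s.filter (c · = i)).map q).prod

theorem prod_fiberProd [CommMonoid M] [Fintype κ] (c : α → κ) (q : α → M) (s : Multiset α) :
    ∏ i, fiberProd c q s i = (s.map q).prod := by
  induction s using Multiset.induction_on with
  | empty => simp [fiberProd]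
  | cons a s ih =>
    have fiberProd_cons (i : κ) :
        fiberProd c q (a ::ₘ s) i = (if c a = i then q a else 1) * fiberProd c q s i := by
      by_cases h : c a = i <;> simp [fiberProd, h]
    simp_rw [fiberProd_cons, Finset.prod_mul_distrib, ih, Fintype.prod_ite_eq,
      Multiset.map_cons, Multiset.prod_cons]

theorem fiberProd_injective [CommMonoidWithZero M] [UniqueFactorizationMonoid M]
    [Subsingleton Mˣ] {c : α → κ} {q : α → M} (hq : ∀ a, Prime (q a))
    (hcq : Function.Injective fun a ↦ (c a, q a)) :
    Function.Injective (fiberProd c q) := by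
  classical
  let fiber (s : Multiset α) (i : κ) : Multiset M := (s.filter (c · = i)).map q
  have normalizedFactors_fiberProd (s : Multiset α) (i : κ) :
      UniqueFactorizationMonoid.normalizedFactors (fiberProd c q s i) = fiber s i :=
    UniqueFactorizationMonoid.normalizedFactors_prod_of_prime fun p hp ↦ by
      obtain ⟨a, -, rfl⟩ := Multiset.mem_map.mp hp
      exact hq a
  have count_fiber (s : Multiset α) (i : κ) (p : M) :
      (s.map fun a ↦ (c a, q a)).count (i, p) = (fiber s i).count p := by
    simp only [fiber, Multiset.count_map, Multiset.filter_filter, Prod.mk.injEq, and_comm, eq_comm]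
  intro s t hst
  refine Multiset.map_injective hcq (Multiset.ext.mpr fun ⟨i, p⟩ ↦ ?_)
  rw [count_fiber, count_fiber, ← normalizedFactors_fiberProd, hst, normalizedFactors_fiberProd]

end FiberProducts

section BoundedProducts

/-- The tuples of positive integers indexed by `κ` with product at most `N`; positivity of the
entries is encoded as positivity of their product. -/
def tuplesProdLe (κ : Type*) [Fintype κ] (N : ℕ) : Set (κ → ℕ) :=
  {n | 0 < ∏ i, n i ∧ ∏ i, n i ≤ N}

variable {κ : Type*} [Fintype κ] {N : ℕ}

theorem tuplesProdLe_subset_piFinset_Icc [DecidableEq κ] :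
    tuplesProdLe κ N ⊆ Fintype.piFinset fun _ : κ ↦ Finset.Icc 1 N := by
  rintro n ⟨hpos, hN⟩
  refine Fintype.mem_piFinset.mpr fun i ↦ Finset.mem_Icc.mpr ?_
  have hdvd : n i ∣ ∏ j, n j := Finset.dvd_prod_of_mem n (Finset.mem_univ i)
  exact ⟨Nat.pos_of_dvd_of_pos hdvd hpos, (Nat.le_of_dvd hpos hdvd).trans hN⟩

theorem finite_tuplesProdLe : (tuplesProdLe κ N).Finite := by
  classical
  exact (Finset.finite_toSet _).subset tuplesProdLe_subset_piFinset_Icc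

-- Rankin's trick: each tuple is counted with the weight `N / ∏ i, n i ≥ 1`.
theorem ncard_tuplesProdLe_le_mul_harmonic_pow :
    ((tuplesProdLe κ N).ncard : ℚ) ≤ N * harmonic N ^ Fintype.card κ := by
  classical
  set t := (finite_tuplesProdLe (κ := κ) (N := N)).toFinset
  rw [Set.ncard_eq_toFinset_card _ finite_tuplesProdLe]
  calc (t.card : ℚ)
      = ∑ n ∈ t, 1 := by simp
    _ ≤ ∑ n ∈ t, N * ∏ i, (n i : ℚ)⁻¹ := Finset.sum_le_sum fun n hn ↦ by
        obtain ⟨hpos, hN⟩ := finite_tuplesProdLe.mem_toFinset.mp hn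
        rw [Finset.prod_inv_distrib, ← Nat.cast_prod, ← div_eq_mul_inv,
          one_le_div (by exact_mod_cast hpos)]
        exact_mod_cast hN
    _ ≤ ∑ n ∈ Fintype.piFinset fun _ : κ ↦ Finset.Icc 1 N, N * ∏ i, (n i : ℚ)⁻¹ :=
        Finset.sum_le_sum_of_subset_of_nonneg
          (finite_tuplesProdLe.toFinset_subset.mpr tuplesProdLe_subset_piFinset_Icc)
          fun _ _ _ ↦ by positivity
    _ = N * harmonic N ^ Fintype.card κ := by
        rw [← Finset.mul_sum, harmonic_eq_sum_Icc, ← Finset.card_univ, ← Finset.prod_const,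
          Finset.prod_univ_sum]

theorem floor_mul_harmonic_pow_le {Y : ℝ} (hY : 1 ≤ Y) (k : ℕ) :
    (⌊Y⌋₊ * harmonic ⌊Y⌋₊ ^ k : ℝ) ≤ Y * (1 + Real.log Y) ^ k := by
  have harmonic_nonneg : (0 : ℝ) ≤ harmonic ⌊Y⌋₊ := by
    rw [harmonic_eq_sum_Icc]
    positivity
  gcongr
  · exact Nat.floor_le (by positivity)
  · exact harmonic_floor_le_one_add_log Y hY

end BoundedProducts

theorem exists_multiset_prime_prod_eq {M : Type*} [CommMonoidWithZero M]
    [UniqueFactorizationMonoid M] [Subsingleton Mˣ] {a : M} (ha : a ≠ 0) :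
    ∃ s : Multiset {p : M // Prime p}, (s.map Subtype.val).prod = a := by
  obtain ⟨s, hprime, hprod⟩ := UniqueFactorizationMonoid.exists_prime_factors a ha
  lift s to Multiset {p : M // Prime p} using hprime
  exact ⟨s, associated_iff_eq.mp hprod⟩

theorem encard_primesOver_le_finrank {R : Type*} [CommRing R] [IsDomain R] (p : Ideal R)
    [p.IsPrime] (S : Type*) [CommRing S] [Algebra R S] [Module.Finite R S] [Module.Flat R S] :
    (p.primesOver S).encard ≤ Module.finrank R S := by
  have := (Algebra.QuasiFinite.finite_primesOver p (S := S)).fintype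
  rw [← Ideal.sum_ramification_inertia_eq_finrank p S, Set.encard_eq_coe_toFinset_card]
  norm_cast
  rw [Set.toFinset_card, Fintype.card_eq_sum_ones]
  refine Finset.sum_le_sum fun q _ ↦ ?_
  have := q.2.1
  exact Nat.mul_pos (q.1.ramificationIdx_pos R) (q.1.inertiaDeg_pos R)

section IdealCount

variable {S : Type*} [CommRing S]

/-- The rational prime below a nonzero prime ideal `P`, as the positive generator of `P ∩ ℤ`. -/
noncomputable def primeBelow (P : {P : Ideal S // Prime P}) : ℕ :=
  Ideal.absNorm (P.1.under ℤ)

variable [IsDedekindDomain S]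

theorem prime_primeBelow [Algebra.IsIntegral ℤ S] (P : {P : Ideal S // Prime P}) :
    (primeBelow P).Prime := by
  have := Ideal.isPrime_of_prime P.2
  have : NeZero P.1 := ⟨P.2.ne_zero⟩
  exact Nat.absNorm_under_prime P.1

variable [Module.Free ℤ S]

theorem primeBelow_dvd_absNorm (P : {P : Ideal S // Prime P}) :
    primeBelow P ∣ Ideal.absNorm P.1 :=
  Int.absNorm_under_dvd_absNorm P.1

variable [Module.Finite ℤ S]

theorem encard_primeBelow_fiber_le_finrank (p : ℕ) :
    (primeBelow (S := S) ⁻¹' {p}).encard ≤ Module.finrank ℤ S := by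
  by_cases hp : p.Prime
  · have : (Ideal.span {(p : ℤ)}).IsPrime :=
      (Ideal.span_singleton_prime (by exact_mod_cast hp.ne_zero)).mpr
        (Nat.prime_iff_prime_int.mp hp)
    refine le_trans (Set.encard_le_encard_of_injOn ?_ Subtype.val_injective.injOn)
      (encard_primesOver_le_finrank (Ideal.span {(p : ℤ)}) S)
    rintro P rfl
    exact ⟨Ideal.isPrime_of_prime P.2, Int.liesOver_span_absNorm P.1⟩
  · have : primeBelow (S := S) ⁻¹' {p} = ∅ :=
      Set.eq_empty_of_forall_notMem fun P hP ↦ hp (hP ▸ prime_primeBelow P)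
    simp [this]

variable (S) in
theorem exists_injective_tuple_prod_dvd_absNorm :
    ∃ Φ : {I : Ideal S // I ≠ ⊥} → Fin (Module.finrank ℤ S) → ℕ,
      Function.Injective Φ ∧ ∀ I, ∏ i, Φ I i ∣ Ideal.absNorm I.1 := by
  obtain ⟨c, hc⟩ :=
    exists_fin_injective_prodMk_of_encard_fiber_le _ (encard_primeBelow_fiber_le_finrank (S := S))
  choose factors prod_factors using
    fun I : {I : Ideal S // I ≠ ⊥} ↦ exists_multiset_prime_prod_eq I.2
  have factors_injective : Function.Injective factors := fun I J h ↦
    Subtype.ext (by rw [← prod_factors I, ← prod_factors J, h])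
  refine ⟨fun I ↦ fiberProd c primeBelow (factors I),
    (fiberProd_injective (fun P ↦ (prime_primeBelow P).prime) hc).comp factors_injective,
    fun I ↦ ?_⟩
  rw [prod_fiberProd, ← prod_factors I, map_multiset_prod, Multiset.map_map]
  exact Multiset.prod_dvd_prod_of_dvd _ _ fun P _ ↦ primeBelow_dvd_absNorm P

theorem card_ideal_absNorm_lt_le_ncard_tuplesProdLe (Y : ℝ) :
    Nat.card {I : Ideal S // I ≠ ⊥ ∧ (Ideal.absNorm I : ℝ) < Y} ≤
      (tuplesProdLe (Fin (Module.finrank ℤ S)) ⌊Y⌋₊).ncard := by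
  obtain ⟨Φ, Φ_injective, prod_dvd⟩ := exists_injective_tuple_prod_dvd_absNorm S
  have Φ_mem (I : {I : Ideal S // I ≠ ⊥}) (hI : (Ideal.absNorm I.1 : ℝ) < Y) :
      Φ I ∈ tuplesProdLe (Fin (Module.finrank ℤ S)) ⌊Y⌋₊ := by
    have absNorm_pos : 0 < Ideal.absNorm I.1 :=
      Nat.pos_of_ne_zero (Ideal.absNorm_eq_zero_iff.not.mpr I.2)
    exact ⟨Nat.pos_of_dvd_of_pos (prod_dvd I) absNorm_pos,
      (Nat.le_of_dvd absNorm_pos (prod_dvd I)).trans (Nat.le_floor hI.le)⟩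
  have : Finite (tuplesProdLe (Fin (Module.finrank ℤ S)) ⌊Y⌋₊) := finite_tuplesProdLe
  refine Nat.card_le_card_of_injective (fun I ↦ ⟨Φ ⟨I.1, I.2.1⟩, Φ_mem _ I.2.2⟩) fun I J h ↦ ?_
  exact Subtype.ext (Subtype.mk.inj (Φ_injective (congrArg Subtype.val h)))

variable (S) in
theorem stmt_0_general (Y : ℝ) (hY : 1 ≤ Y) :
    (Nat.card {I : Ideal S // I ≠ ⊥ ∧ (Ideal.absNorm I : ℝ) < Y} : ℝ) ≤
      Y * (1 + Real.log Y) ^ Module.finrank ℤ S :=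
  calc (Nat.card {I : Ideal S // I ≠ ⊥ ∧ (Ideal.absNorm I : ℝ) < Y} : ℝ)
      ≤ (tuplesProdLe (Fin (Module.finrank ℤ S)) ⌊Y⌋₊).ncard := by
        exact_mod_cast card_ideal_absNorm_lt_le_ncard_tuplesProdLe Y
    _ ≤ ⌊Y⌋₊ * harmonic ⌊Y⌋₊ ^ Module.finrank ℤ S := by
        have := ncard_tuplesProdLe_le_mul_harmonic_pow (κ := Fin (Module.finrank ℤ S)) (N := ⌊Y⌋₊)
        rw [Fintype.card_fin] at this
        exact_mod_cast this
    _ ≤ Y * (1 + Real.log Y) ^ Module.finrank ℤ S := floor_mul_harmonic_pow_le hY _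

end IdealCount

/-- For a number field `F` of degree `f` over `ℚ` and any real `Y > 1`, the number of
nonzero integral ideals of `𝒪_F` with absolute norm less than `Y` is at most
`e·Y·(1 + log Y)^f`. -/
theorem stmt_0 (F : Type*) [Field F] [NumberField F] (f : ℕ)
    (hf : Module.finrank ℚ F = f) (Y : ℝ) (hY : 1 < Y) :
    (Nat.card {I : Ideal (𝓞 F) // I ≠ ⊥ ∧ (Ideal.absNorm I : ℝ) < Y} : ℝ) ≤
      Real.exp 1 * Y * (1 + Real.log Y) ^ f := by
  rw [← hf, ← RingOfIntegers.rank F, mul_assoc]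
  have bound := stmt_0_general (𝓞 F) Y hY.le
  exact bound.trans
    (le_mul_of_one_le_left ((Nat.cast_nonneg _).trans bound) (Real.one_le_exp zero_le_one))
end

section
/- Let G be a finite group all of whose irreducible complex representations have degree at most r. Then G has an abelian subgroup of index at most (r!)². -/
open CategoryTheory

/-!
Induct on the degree bound `n`. If some subgroup of index at most `n ^ 2` has all its degrees at
most `n - 1`, the bound for that subgroup suffices, since `(n - 1)! ^ 2 * n ^ 2 = n ! ^ 2`.
Otherwise every subgroup `K` of index at most `n ^ 2` acts irreducibly in some representation `V` of
`G` of degree `n`. In `Hom(U, V)`, or in the `V`-valued functions on a `G`-set, each irreducible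
constituent has degree at most `n`, so evaluation at a weight vector or a fixed point of `K` maps it
isomorphically to `V`. Comparing these evaluations shows that the commutator subgroup `D` of `G` is
perfect, and that an element with at most `n ^ 2` conjugates centralizes `D`. Since
`|G| ≤ n ^ 2 * k(G)`, where `k(G)` is the number of conjugacy classes, many elements have few
conjugates, and the centralizer `C` of `D` has index at most `n ^ 4`.

Now `C` commutes with `D`, whose nontrivial irreducible representations have degree at least `2`, so
the degrees of `C` are at most `n / 2`; adjoining to `C` an element of `D` whose square is not in
`C` does not change them and divides the index by at least `3`. Since
`(n / 2)! ^ 2 * n ^ 4 ≤ 3 * n ! ^ 2` for `3 ≤ n`, the induction closes, and `n = 2` is impossible: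
a perfect group with degrees at most `2` has a fixed vector on the traceless endomorphisms of each
representation of degree `2`, against Schur's lemma.
-/

namespace BoundedDegree

open Module Representation

section Irreducible

variable {k : Type*} [Field k] {G : Type*} [Group G]
  {V : Type*} [AddCommGroup V] [Module k V] {W : Type*} [AddCommGroup W] [Module k W]

/-- The restriction of a representation to a subgroup. -/
abbrev res (ρ : Representation k G V) (K : Subgroup G) : Representation k K V :=
  ρ.comp K.subtype

lemma nontrivial_of_isIrreducible (ρ : Representation k G V) [ρ.IsIrreducible] :
    Nontrivial V := by
  by_contra hV
  rw [not_nontrivial_iff_subsingleton] at hV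
  exact bot_ne_top (α := Subrepresentation ρ)
    (Subrepresentation.toSubmodule_injective (Subsingleton.elim _ _))

lemma eq_bot_or_eq_top_of_invariant (ρ : Representation k G V) [ρ.IsIrreducible]
    (S : Submodule k V) (hS : ∀ g, ∀ v ∈ S, ρ g v ∈ S) : S = ⊥ ∨ S = ⊤ :=
  (eq_bot_or_eq_top (⟨S, fun g _ hv ↦ hS g _ hv⟩ : Subrepresentation ρ)).imp
    (congrArg Subrepresentation.toSubmodule) (congrArg Subrepresentation.toSubmodule)

lemma isIrreducible_of_invariant [Nontrivial V] {ρ : Representation k G V}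
    (h : ∀ S : Submodule k V, (∀ g, ∀ v ∈ S, ρ g v ∈ S) → S = ⊥ ∨ S = ⊤) :
    ρ.IsIrreducible where
  exists_pair_ne := ⟨⊥, ⊤, fun e ↦ bot_ne_top (congrArg Subrepresentation.toSubmodule e)⟩
  eq_bot_or_eq_top S := (h S.toSubmodule fun g _ hv ↦ S.apply_mem_toSubmodule g hv).imp
    (fun e ↦ Subrepresentation.toSubmodule_injective e)
    (fun e ↦ Subrepresentation.toSubmodule_injective e)

lemma isIrreducible_of_finrank_eq_one (ρ : Representation k G V) (hV : finrank k V = 1) :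
    ρ.IsIrreducible := by
  have : Nontrivial V := Module.nontrivial_of_finrank_eq_succ hV
  have : IsSimpleOrder (Submodule k V) := is_simple_module_of_finrank_eq_one hV
  exact isIrreducible_of_invariant fun S _ ↦ eq_bot_or_eq_top S

lemma isIrreducible_of_linearEquiv {ρ : Representation k G V} {σ : Representation k G W}
    [σ.IsIrreducible] (e : V ≃ₗ[k] W) (he : ∀ g v, e (ρ g v) = σ g (e v)) :
    ρ.IsIrreducible := by
  have : Nontrivial W := nontrivial_of_isIrreducible σ
  have : Nontrivial V := e.toEquiv.nontrivial
  refine isIrreducible_of_invariant fun S hS ↦ ?_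
  have hmap : ∀ g, ∀ w ∈ S.map e.toLinearMap, σ g w ∈ S.map e.toLinearMap := by
    rintro g _ ⟨v, hv, rfl⟩
    exact ⟨ρ g v, hS g v hv, he g v⟩
  exact (eq_bot_or_eq_top_of_invariant σ _ hmap).imp
    (map_eq_bot_iff (Submodule.orderIsoMapComap e)).1
    (map_eq_top_iff (Submodule.orderIsoMapComap e)).1

/-- The representation on `W` obtained from one on `V` by transport along `V ≃ₗ[k] W`. -/
def transport (e : V ≃ₗ[k] W) (ρ : Representation k G V) : Representation k G W :=
  (e.conjAlgEquiv k : End k V →* End k W).comp ρ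

instance isIrreducible_transport (e : V ≃ₗ[k] W) (ρ : Representation k G V) [ρ.IsIrreducible] :
    (transport e ρ).IsIrreducible :=
  isIrreducible_of_linearEquiv (σ := ρ) e.symm fun g w ↦ e.symm_apply_apply (ρ g (e.symm w))

lemma isIrreducible_comp_of_surjective {N : Type*} [Group N] {φ : N →* G}
    (hφ : Function.Surjective φ) (ρ : Representation k G V) [ρ.IsIrreducible] :
    IsIrreducible (ρ.comp φ : Representation k N V) := by
  have : Nontrivial V := nontrivial_of_isIrreducible ρ
  refine isIrreducible_of_invariant fun S hS ↦ eq_bot_or_eq_top_of_invariant ρ S fun g ↦ ?_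
  obtain ⟨x, rfl⟩ := hφ g
  exact hS x

lemma isIrreducible_of_isAtom {ρ : Representation k G V} {P : Subrepresentation ρ} (hP : IsAtom P) :
    P.toRepresentation.IsIrreducible := by
  have : Nontrivial P.toSubmodule := Submodule.nontrivial_iff_ne_bot.2 fun h ↦
    hP.1 (Subrepresentation.toSubmodule_injective h)
  refine isIrreducible_of_invariant fun S hS ↦ ?_
  let Q : Subrepresentation ρ := ⟨S.map P.toSubmodule.subtype, by
    rintro g _ ⟨v, hv, rfl⟩
    exact ⟨_, hS g v hv, rfl⟩⟩
  have hQ : Q ≤ P := by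
    rintro _ ⟨v, -, rfl⟩
    exact v.2
  have hinj := Submodule.map_injective_of_injective P.toSubmodule.injective_subtype
  rcases hP.le_iff.1 hQ with h | h
  · exact .inl (hinj ((congrArg Subrepresentation.toSubmodule h).trans (Submodule.map_bot _).symm))
  · exact .inr (hinj ((congrArg Subrepresentation.toSubmodule h).trans
      (Submodule.map_subtype_top _).symm))

lemma mem_of_invariant (ρ : Representation k G V) [ρ.IsIrreducible]
    (S : Submodule k V) (hS : ∀ g, ∀ v ∈ S, ρ g v ∈ S) {v : V} (hv : v ∈ S) (hv0 : v ≠ 0) (w : V) :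
    w ∈ S := by
  rcases eq_bot_or_eq_top_of_invariant ρ S hS with rfl | rfl
  · exact absurd ((Submodule.mem_bot k).1 hv) hv0
  · trivial

lemma exists_eq_smul_of_commute [IsAlgClosed k] [FiniteDimensional k V] (ρ : Representation k G V)
    [ρ.IsIrreducible] (A : V →ₗ[k] V) (hA : ∀ g v, A (ρ g v) = ρ g (A v)) :
    ∃ c : k, ∀ v, A v = c • v := by
  obtain ⟨c, hc⟩ := (IsIrreducible.algebraMap_intertwiningMap_bijective_of_isAlgClosed
    (ρ := ρ)).2 ⟨A, fun g ↦ LinearMap.ext (hA g)⟩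
  exact ⟨c, fun v ↦ (congrArg (fun f : IntertwiningMap ρ ρ ↦ f v) hc).symm⟩

end Irreducible

section Semisimple

variable {k : Type*} [Field k] [CharZero k] {G : Type*} [Group G] [Finite G]
  {V : Type*} [AddCommGroup V] [Module k V] (ρ : Representation k G V)

instance isSemisimpleRepresentation : IsSemisimpleRepresentation ρ :=
  have : NeZero (Nat.card G : k) := ⟨Nat.cast_ne_zero.2 Nat.card_pos.ne'⟩
  inferInstance

lemma exists_isAtom_le {S : Subrepresentation ρ} (hS : S ≠ ⊥) :
    ∃ P ≤ S, IsAtom P := by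
  have : IsAtomic (Subrepresentation ρ) :=
    (OrderIso.isAtomic_iff Subrepresentation.subrepresentationSubmoduleOrderIso).2
      (have := (isSemisimpleRepresentation_iff_isSemisimpleModule_asModule ρ).1 inferInstance
       inferInstance)
  obtain ⟨P, hP, hPS⟩ := (eq_bot_or_exists_atom_le S).resolve_left hS
  exact ⟨P, hPS, hP⟩

lemma exists_isAtom [Nontrivial V] :
    ∃ P : Subrepresentation ρ, IsAtom P := by
  have htop : (⊤ : Subrepresentation ρ) ≠ ⊥ := fun e ↦
    top_ne_bot (congrArg Subrepresentation.toSubmodule e)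
  obtain ⟨P, -, hP⟩ := exists_isAtom_le ρ htop
  exact ⟨P, hP⟩

lemma eq_top_of_forall_isAtom_le (S : Submodule k V)
    (hS : ∀ P : Subrepresentation ρ, IsAtom P → P.toSubmodule ≤ S) :
    S = ⊤ := by
  let S' : Subrepresentation ρ := ⟨⨅ g, S.comap (ρ g), fun g v hv ↦ by
    simp only [Submodule.mem_iInf, Submodule.mem_comap] at hv ⊢
    intro x
    simpa using hv (x * g)⟩
  have hS' : S'.toSubmodule ≤ S := fun v hv ↦ by
    have hv' := (Submodule.mem_iInf _).1 hv 1
    simpa using hv'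
  obtain ⟨Q, hQ⟩ := exists_isCompl S'
  suffices Q = ⊥ by
    have htop : S' = ⊤ := by simpa [this] using hQ.sup_eq_top
    exact top_le_iff.1 ((congrArg Subrepresentation.toSubmodule htop).ge.trans hS')
  by_contra hQ0
  obtain ⟨P, hPQ, hP⟩ := exists_isAtom_le ρ hQ0
  have hPS' : P ≤ S' := fun v hv ↦ (Submodule.mem_iInf _).2 fun g ↦
    hS P hP (P.apply_mem_toSubmodule g hv)
  exact hP.1 (le_bot_iff.1 (hQ.inf_eq_bot ▸ le_inf hPS' hPQ))

end Semisimple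

section TwistedIntertwining

variable {k : Type*} [Field k] {G : Type*} [Group G]
  {X : Type*} [AddCommGroup X] [Module k X] {W : Type*} [AddCommGroup W] [Module k W]

/-- The linear map `α` commutes with the action of each `g` up to the scalar `χ g`. Evaluations at
weight vectors are of this kind. -/
def IsTwistedIntertwining (χ : G → kˣ) (σ : Representation k G X) (ρ : Representation k G W)
    (α : X →ₗ[k] W) : Prop :=
  ∀ g x, α (σ g x) = χ g • ρ g (α x)

/-- The translates of the linear map `α` by the group have no common zero. -/
def IsSeparating (σ : Representation k G X) (α : X →ₗ[k] W) : Prop :=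
  ∀ x, (∀ g, α (σ g x) = 0) → x = 0

variable {χ : G → kˣ} {σ : Representation k G X} {ρ : Representation k G W} {α β : X →ₗ[k] W}

lemma IsTwistedIntertwining.surjective [ρ.IsIrreducible] (hα : IsTwistedIntertwining χ σ ρ α)
    (hα0 : α ≠ 0) : Function.Surjective α := by
  have hinv : ∀ g, ∀ w ∈ LinearMap.range α, ρ g w ∈ LinearMap.range α := by
    rintro g _ ⟨x, rfl⟩
    exact ⟨(χ g)⁻¹ • σ g x, by rw [LinearMap.map_smul_of_tower, hα, inv_smul_smul]⟩
  exact LinearMap.range_eq_top.1 ((eq_bot_or_eq_top_of_invariant ρ _ hinv).resolve_left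
    (mt LinearMap.range_eq_bot.1 hα0))

lemma IsTwistedIntertwining.ker_le_ker [FiniteDimensional k X] [ρ.IsIrreducible]
    (hα : IsTwistedIntertwining χ σ ρ α) (hβ : IsTwistedIntertwining χ σ ρ β) (hα0 : α ≠ 0)
    (hdim : finrank k X < 2 * finrank k W) : LinearMap.ker α ≤ LinearMap.ker β := by
  have hinv : ∀ g, ∀ w ∈ (LinearMap.ker α).map β, ρ g w ∈ (LinearMap.ker α).map β := by
    rintro g _ ⟨x, hx, rfl⟩
    refine ⟨(χ g)⁻¹ • σ g x, ?_, by rw [LinearMap.map_smul_of_tower, hβ, inv_smul_smul]⟩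
    rw [SetLike.mem_coe, LinearMap.mem_ker] at hx ⊢
    rw [LinearMap.map_smul_of_tower, hα, hx, map_zero, smul_zero, smul_zero]
  -- By the bound on `dim X`, the kernel of `α` is too small for `β` to map it onto `W`.
  rcases eq_bot_or_eq_top_of_invariant ρ _ hinv with h | h
  · exact LinearMap.le_ker_iff_map.2 h
  · have hker := Submodule.finrank_map_le β (LinearMap.ker α)
    have hrank := α.finrank_range_add_finrank_ker
    rw [LinearMap.range_eq_top.2 (hα.surjective hα0)] at hrank
    rw [h] at hker
    rw [finrank_top] at hker hrank
    omega

lemma IsTwistedIntertwining.exists_eq_smul [IsAlgClosed k] [FiniteDimensional k X]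
    [FiniteDimensional k W] [ρ.IsIrreducible]
    (hα : IsTwistedIntertwining χ σ ρ α) (hβ : IsTwistedIntertwining χ σ ρ β) (hα0 : α ≠ 0)
    (hdim : finrank k X < 2 * finrank k W) : ∃ c : k, ∀ x, β x = c • α x := by
  obtain ⟨s, hs⟩ := α.exists_rightInverse_of_surjective
    (LinearMap.range_eq_top.2 (hα.surjective hα0))
  have hs' (w) : α (s w) = w := LinearMap.congr_fun hs w
  have hfactor (x) : β (s (α x)) = β x := by
    have : s (α x) - x ∈ LinearMap.ker α := by simp [hs']
    simpa [sub_eq_zero] using hα.ker_le_ker hβ hα0 hdim this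
  obtain ⟨c, hc⟩ := exists_eq_smul_of_commute ρ (β ∘ₗ s) fun g w ↦ by
    have : ρ g w = α ((χ g)⁻¹ • σ g (s w)) := by
      rw [LinearMap.map_smul_of_tower, hα, hs', inv_smul_smul]
    rw [LinearMap.comp_apply, this, hfactor, LinearMap.map_smul_of_tower, hβ, inv_smul_smul,
      LinearMap.comp_apply]
  exact ⟨c, fun x ↦ by rw [← hc, LinearMap.comp_apply, hfactor]⟩

lemma IsSeparating.domRestrict_ne_zero (hα : IsSeparating σ α) {P : Subrepresentation σ}
    (hP : IsAtom P) : α.domRestrict P.toSubmodule ≠ 0 := by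
  intro h0
  have := isIrreducible_of_isAtom hP
  have := nontrivial_of_isIrreducible P.toRepresentation
  obtain ⟨x, hx⟩ := exists_ne (0 : P.toSubmodule)
  exact hx (Subtype.ext (hα x fun g ↦
    LinearMap.congr_fun h0 ⟨σ g x, P.apply_mem_toSubmodule g x.2⟩))

variable {K : Subgroup G} {χ : K → kˣ} {ρ : Representation k K W} [ρ.IsIrreducible]

lemma IsSeparating.surjective (hsep : IsSeparating σ α)
    (hα : IsTwistedIntertwining χ (res σ K) ρ α) {P : Subrepresentation σ}
    (hP : IsAtom P) : Function.Surjective (α.domRestrict P.toSubmodule) :=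
  IsTwistedIntertwining.surjective (σ := res P.toRepresentation K) (fun g x ↦ hα g x)
    (hsep.domRestrict_ne_zero hP)

lemma IsSeparating.injective (hsep : IsSeparating σ α)
    (hα : IsTwistedIntertwining χ (res σ K) ρ α) {P : Subrepresentation σ}
    (hP : IsAtom P) [FiniteDimensional k X]
    (hdim : finrank k P.toSubmodule ≤ finrank k W) :
    Function.Injective (α.domRestrict P.toSubmodule) := by
  have hsurj := hsep.surjective hα hP
  have hrank := (α.domRestrict P.toSubmodule).finrank_range_add_finrank_ker
  rw [LinearMap.range_eq_top.2 hsurj, finrank_top] at hrank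
  exact LinearMap.ker_eq_bot.1 (Submodule.finrank_eq_zero.1 (by omega))

lemma IsSeparating.exists_isIrreducible_surjective [FiniteDimensional k X]
    (hsep : IsSeparating σ α) (hα : IsTwistedIntertwining χ (res σ K) ρ α)
    {P : Subrepresentation σ} (hP : IsAtom P) :
    ∃ (d : ℕ) (τ : Representation k G (Fin d → k)) (β : (Fin d → k) →ₗ[k] W), τ.IsIrreducible ∧
      Function.Surjective β ∧ IsTwistedIntertwining χ (res τ K) ρ β := by
  let e := (finBasis k P.toSubmodule).equivFun
  have := isIrreducible_of_isAtom hP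
  refine ⟨_, transport e P.toRepresentation, α.domRestrict P.toSubmodule ∘ₗ e.symm.toLinearMap,
    inferInstance, (hsep.surjective hα hP).comp e.symm.surjective, fun g v ↦ ?_⟩
  calc α.domRestrict P.toSubmodule (e.symm (e (P.toRepresentation g (e.symm v))))
    _ = α.domRestrict P.toSubmodule (P.toRepresentation g (e.symm v)) := by
      rw [e.symm_apply_apply]
    _ = χ g • ρ g (α.domRestrict P.toSubmodule (e.symm v)) := hα g (e.symm v : P.toSubmodule)

lemma IsSeparating.exists_eq_smul [IsAlgClosed k] [FiniteDimensional k X] [FiniteDimensional k W]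
    (hsep : IsSeparating σ α)
    (hα : IsTwistedIntertwining χ (res σ K) ρ α) (hβ : IsTwistedIntertwining χ (res σ K) ρ β)
    {P : Subrepresentation σ} (hP : IsAtom P)
    (hdim : finrank k P.toSubmodule < 2 * finrank k W) :
    ∃ c : k, ∀ x ∈ P, β x = c • α x := by
  obtain ⟨c, hc⟩ := IsTwistedIntertwining.exists_eq_smul (σ := res P.toRepresentation K)
    (α := α.domRestrict P.toSubmodule) (β := β.domRestrict P.toSubmodule)
    (fun g x ↦ hα g x) (fun g x ↦ hβ g x) (hsep.domRestrict_ne_zero hP) hdim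
  exact ⟨c, fun x hx ↦ hc ⟨x, hx⟩⟩

end TwistedIntertwining

section Coinduction

variable {k : Type*} [Field k] {G : Type*} [Group G] {K : Subgroup G}
  {W : Type*} [AddCommGroup W] [Module k W] (ρ : Representation k K W)

/-- Evaluation at `x` on the coinduced representation. -/
def coindEval (x : G) : coindV K.subtype ρ →ₗ[k] W :=
  LinearMap.proj x ∘ₗ (coindV K.subtype ρ).subtype

lemma coindEval_coind (x g : G) (f : coindV K.subtype ρ) :
    coindEval ρ x (coind K.subtype ρ g f) = coindEval ρ (x * g) f := rfl

lemma isSeparating_coindEval_one : IsSeparating (coind K.subtype ρ) (coindEval ρ 1) := by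
  intro f hf
  ext g
  have hfg := hf g
  rwa [coindEval_coind, one_mul] at hfg

lemma isTwistedIntertwining_coindEval {x : G} (hx : x ∈ Subgroup.centralizer (K : Set G)) :
    IsTwistedIntertwining 1 (res (coind K.subtype ρ) K) ρ (coindEval ρ x) := by
  intro g f
  rw [Pi.one_apply, one_smul, MonoidHom.comp_apply, coindEval_coind]
  have hxg : x * K.subtype g = g * x := (Subgroup.mem_centralizer_iff.1 hx g g.2).symm
  rw [hxg]
  exact f.2 g x

lemma exists_coindEval_one_eq (w : W) :
    ∃ f, coindEval ρ 1 f = w ∧ ∀ x ∉ K, coindEval ρ x f = 0 := by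
  classical
  refine ⟨⟨fun x ↦ if hx : x ∈ K then ρ ⟨x, hx⟩ w else 0, fun g x ↦ ?_⟩, ?_, fun x hx ↦ ?_⟩
  · by_cases hx : x ∈ K
    · have hgx : (g : G) * x ∈ K := K.mul_mem g.2 hx
      calc _ = ρ (g * ⟨x, hx⟩) w := dif_pos hgx
        _ = ρ g (ρ ⟨x, hx⟩ w) := by rw [map_mul, Module.End.mul_apply]
        _ = _ := by simp only [hx, dif_pos]
    · simp [hx, K.mul_mem_cancel_left g.2]
  · have : ρ ⟨1, K.one_mem⟩ = 1 := map_one ρ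
    simp [coindEval, this]
  · simp [coindEval, hx]

lemma nontrivial_coindV [Nontrivial W] : Nontrivial (coindV K.subtype ρ) := by
  obtain ⟨w, hw⟩ := exists_ne (0 : W)
  obtain ⟨f, hf, -⟩ := exists_coindEval_one_eq ρ w
  exact ⟨f, 0, fun h ↦ hw (by rw [← hf, h, map_zero])⟩

end Coinduction

section DegreeLE

variable {k : Type*} [Field k] {G : Type*} [Group G] {n : ℕ}

/-- Every irreducible representation of `G` over `k` has degree at most `n`. Quantifying over
coordinate spaces only keeps the notion independent of universes. -/
def DegreeLE (k : Type*) [Field k] (G : Type*) [Group G] (n : ℕ) : Prop :=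
  ∀ (d : ℕ) (ρ : Representation k G (Fin d → k)), ρ.IsIrreducible → d ≤ n

lemma DegreeLE.finrank_le (h : DegreeLE k G n) {V : Type*} [AddCommGroup V] [Module k V]
    [FiniteDimensional k V] (ρ : Representation k G V) [ρ.IsIrreducible] : finrank k V ≤ n :=
  h _ (transport (finBasis k V).equivFun ρ) inferInstance

lemma DegreeLE.finrank_le_of_isAtom (h : DegreeLE k G n) {V : Type*} [AddCommGroup V] [Module k V]
    [FiniteDimensional k V] {ρ : Representation k G V} {P : Subrepresentation ρ} (hP : IsAtom P) :
    finrank k P.toSubmodule ≤ n :=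
  have := isIrreducible_of_isAtom hP
  h.finrank_le P.toRepresentation

lemma DegreeLE.of_surjective {N : Type*} [Group N] (h : DegreeLE k N n) {φ : N →* G}
    (hφ : Function.Surjective φ) : DegreeLE k G n :=
  fun d ρ _ ↦ h d (ρ.comp φ) (isIrreducible_comp_of_surjective hφ ρ)

lemma DegreeLE.pos (h : DegreeLE k G n) : 0 < n := by
  have := isIrreducible_of_finrank_eq_one (Representation.trivial k G (Fin 1 → k)) (by simp)
  exact h 1 (Representation.trivial k G (Fin 1 → k)) this

variable [CharZero k] [Finite G]

lemma exists_isIrreducible_surjective {K : Subgroup G} {W : Type*} [AddCommGroup W]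
    [Module k W] [FiniteDimensional k W] (ρ : Representation k K W) [ρ.IsIrreducible] :
    ∃ (d : ℕ) (τ : Representation k G (Fin d → k)) (β : (Fin d → k) →ₗ[k] W), τ.IsIrreducible ∧
      Function.Surjective β ∧ IsTwistedIntertwining 1 (res τ K) ρ β := by
  have := nontrivial_of_isIrreducible ρ
  have := nontrivial_coindV ρ
  obtain ⟨P, hP⟩ := exists_isAtom (coind K.subtype ρ)
  exact (isSeparating_coindEval_one ρ).exists_isIrreducible_surjective
    (isTwistedIntertwining_coindEval ρ (one_mem _)) hP

lemma DegreeLE.subgroup (h : DegreeLE k G n) (K : Subgroup G) : DegreeLE k K n := by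
  intro d ρ hρ
  obtain ⟨m, τ, β, hτ, hβ, -⟩ := exists_isIrreducible_surjective ρ
  have hle := LinearMap.finrank_le_finrank_of_surjective hβ
  rw [finrank_fin_fun, finrank_fin_fun] at hle
  exact hle.trans (h m τ hτ)

lemma DegreeLE.exists_res_isIrreducible (h : DegreeLE k G n) {K : Subgroup G}
    (hK : ¬ DegreeLE k K (n - 1)) :
    ∃ ρ : Representation k G (Fin n → k), (res ρ K).IsIrreducible := by
  simp only [DegreeLE, not_forall, not_le] at hK
  obtain ⟨d, ρ, hρ, hd⟩ := hK
  obtain ⟨m, τ, β, hτ, hβ, hβK⟩ := exists_isIrreducible_surjective ρ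
  have hle := LinearMap.finrank_le_finrank_of_surjective hβ
  have hm := h m τ hτ
  rw [finrank_fin_fun, finrank_fin_fun] at hle
  obtain rfl : d = n := by omega
  obtain rfl : m = d := by omega
  have hinj := (LinearMap.injective_iff_surjective).2 hβ
  exact ⟨τ, isIrreducible_of_linearEquiv (σ := ρ) (.ofBijective β ⟨hinj, hβ⟩) fun g v ↦
    (hβK g v).trans (one_smul _ _)⟩

end DegreeLE

section FunctionRepresentation

variable {k : Type*} [Field k] {G : Type*} [Group G]
  {V : Type*} [AddCommGroup V] [Module k V] {Y : Type*} [MulAction G Y]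

open MulAction

/-- The representation on the `V`-valued functions on a `G`-set `Y`, with
`(g • f) y = ρ g (f (g⁻¹ • y))`. For `Y = G ⧸ T` it is induced from the restriction of `ρ` to
`T`. -/
def funRep (ρ : Representation k G V) (Y : Type*) [MulAction G Y] :
    Representation k G (Y → V) where
  toFun g := ((ρ g).compLeft Y).comp (LinearMap.funLeft k V (g⁻¹ • ·))
  map_one' := by ext; simp [LinearMap.funLeft]
  map_mul' g h := by ext; simp [LinearMap.funLeft, mul_smul]

@[simp]
lemma funRep_apply (ρ : Representation k G V) (g : G) (f : Y → V) (y : Y) :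
    funRep ρ Y g f y = ρ g (f (g⁻¹ • y)) := rfl

lemma isSeparating_proj [IsPretransitive G Y] (ρ : Representation k G V) (y : Y) :
    IsSeparating (funRep ρ Y) (LinearMap.proj (R := k) y) := by
  intro f hf
  ext z
  obtain ⟨g, rfl⟩ := exists_smul_eq G y z
  simpa using congrArg (ρ g) (hf g⁻¹)

lemma isTwistedIntertwining_proj (ρ : Representation k G V) {K : Subgroup G} {y : Y}
    (hK : K ≤ stabilizer G y) :
    IsTwistedIntertwining 1 (res (funRep ρ Y) K) (res ρ K) (LinearMap.proj (R := k) y) := by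
  intro g f
  have hg : (g : G)⁻¹ • y = y := (stabilizer G y).inv_mem (hK g.2)
  simp [hg]

lemma exists_forall_apply_smul_eq [IsAlgClosed k] [FiniteDimensional k V] [Finite Y]
    [IsPretransitive G Y] (ρ : Representation k G V) {y z : Y} (hdeg : DegreeLE k G (finrank k V))
    (hρ : (res ρ (stabilizer G y ⊓ stabilizer G z)).IsIrreducible)
    {P : Subrepresentation (funRep ρ Y)} (hP : IsAtom P) :
    ∃ c : k, ∀ f ∈ P, ∀ g : G, f (g • z) = c • f (g • y) := by
  have hdim : finrank k P.toSubmodule < 2 * finrank k V := by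
    have := hdeg.pos
    have := hdeg.finrank_le_of_isAtom hP
    omega
  obtain ⟨c, hc⟩ := (isSeparating_proj ρ y).exists_eq_smul
    (isTwistedIntertwining_proj ρ (inf_le_left (b := stabilizer G z)))
    (isTwistedIntertwining_proj ρ inf_le_right) hP hdim
  refine ⟨c, fun f hf g ↦ ?_⟩
  simpa using congrArg (ρ g) (hc _ (P.apply_mem_toSubmodule g⁻¹ hf))

variable [CharZero k] [Finite G] (ρ : Representation k G V)

lemma eq_of_forall_isAtom_apply_eq [Nontrivial V] {y z : Y}
    (h : ∀ P : Subrepresentation (funRep ρ Y), IsAtom P → ∀ f ∈ P, f y = f z) : y = z := by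
  classical
  obtain ⟨v, hv⟩ := exists_ne (0 : V)
  have htop := eq_top_of_forall_isAtom_le (funRep ρ Y)
    (LinearMap.ker (LinearMap.proj (R := k) (φ := fun _ : Y ↦ V) y - LinearMap.proj z))
    fun P hP f hf ↦ LinearMap.mem_ker.2 (sub_eq_zero.2 (h P hP f hf))
  by_contra hyz
  have hmem : Pi.single y v ∈ LinearMap.ker
      (LinearMap.proj (R := k) (φ := fun _ : Y ↦ V) y - LinearMap.proj z) :=
    htop ▸ Submodule.mem_top
  simp [Ne.symm hyz, hv] at hmem

variable [IsAlgClosed k] [FiniteDimensional k V] [Finite Y] [IsPretransitive G Y]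

lemma stabilizer_le_stabilizer {y z : Y} (hdeg : DegreeLE k G (finrank k V))
    (hρ : (res ρ (stabilizer G y ⊓ stabilizer G z)).IsIrreducible) :
    stabilizer G y ≤ stabilizer G z := by
  intro t ht
  have := nontrivial_of_isIrreducible (res ρ (stabilizer G y ⊓ stabilizer G z))
  refine eq_of_forall_isAtom_apply_eq ρ fun P hP f hf ↦ ?_
  obtain ⟨c, hc⟩ := exists_forall_apply_smul_eq ρ hdeg hρ hP
  rw [hc f hf t, mem_stabilizer_iff.1 ht]
  simpa using (hc f hf 1).symm

lemma smul_eq_self_of_commute {y : Y} (hdeg : DegreeLE k G (finrank k V))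
    (hρ : (res ρ (stabilizer G y)).IsIrreducible) {g : G} (hg : g ∈ stabilizer G y)
    (hcomm : ∀ t ∈ stabilizer G y, Commute g t) (z : Y) : g • z = z := by
  have := nontrivial_of_isIrreducible (res ρ (stabilizer G y))
  obtain ⟨w, hw⟩ := exists_eq_smul_of_commute (res ρ (stabilizer G y)) (ρ g) fun t v ↦ by
    simp only [MonoidHom.comp_apply, Subgroup.subtype_apply, ← Module.End.mul_apply, ← map_mul,
      (hcomm t t.2).eq]
  refine eq_of_forall_isAtom_apply_eq ρ fun P hP f hf ↦ ?_
  have hinj := (isSeparating_proj ρ y).injective (isTwistedIntertwining_proj ρ le_rfl) hP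
    (hdeg.finrank_le_of_isAtom hP)
  have hsmul : funRep ρ Y g f = w • f :=
    congrArg Subtype.val
      (@hinj ⟨_, P.apply_mem_toSubmodule g hf⟩ ⟨_, P.toSubmodule.smul_mem w hf⟩ (by
        simpa [hw] using congrArg (fun x ↦ w • f x) ((stabilizer G y).inv_mem hg)))
  have hgz := congrFun hsmul (g • z)
  rw [funRep_apply, inv_smul_smul, hw, Pi.smul_apply] at hgz
  have hw0 : w ≠ 0 := by
    rintro rfl
    obtain ⟨v, hv⟩ := exists_ne (0 : V)
    refine hv ?_
    simpa [hw] using (ρ.inv_self_apply g v).symm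
  exact (smul_right_injective V hw0 hgz).symm

end FunctionRepresentation

section Rigid

variable {k : Type*} [Field k] {G : Type*} [Group G] {n : ℕ}

/-- `n` bounds the degrees of the irreducible representations of `G`, and no subgroup of index at
most `n ^ 2` admits a smaller bound; this is the case left over by the induction on `n`. -/
structure IsRigid (k : Type*) [Field k] (G : Type*) [Group G] (n : ℕ) : Prop where
  degreeLE : DegreeLE k G n
  not_degreeLE : ∀ K : Subgroup G, K.index ≤ n ^ 2 → ¬ DegreeLE k K (n - 1)

variable [CharZero k] [Finite G]

lemma IsRigid.exists_res_isIrreducible (h : IsRigid k G n) {K : Subgroup G}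
    (hK : K.index ≤ n ^ 2) : ∃ ρ : Representation k G (Fin n → k), (res ρ K).IsIrreducible :=
  h.degreeLE.exists_res_isIrreducible (h.not_degreeLE K hK)

variable [IsAlgClosed k]

lemma commutator_le_of_res_isIrreducible {V : Type*} [AddCommGroup V] [Module k V]
    [FiniteDimensional k V] (ρ : Representation k G V) (hdeg : DegreeLE k G (finrank k V))
    (T : Subgroup G) [T.Normal] [(res ρ T).IsIrreducible] : commutator G ≤ T := by
  have hirr (b : G) : (res ρ (MulAction.stabilizer G ((1 : G) : G ⧸ T) ⊓
      MulAction.stabilizer G (b : G ⧸ T))).IsIrreducible := by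
    have hb : MulAction.stabilizer G (b : G ⧸ T) = T := by
      ext g
      rw [MulAction.mem_stabilizer_iff, MulAction.Quotient.smul_coe, eq_comm, QuotientGroup.eq,
        smul_eq_mul, ← mul_assoc, ← Subgroup.Normal.mem_comm_iff inferInstance,
        mul_inv_cancel_left]
    rwa [MulAction.stabilizer_quotient, hb, inf_idem]
  have := nontrivial_of_isIrreducible (res ρ T)
  refine Subgroup.Normal.quotient_commutative_iff_commutator_le.1 ⟨⟨fun a b ↦ ?_⟩⟩
  induction a using QuotientGroup.induction_on with | H a => ?_
  induction b using QuotientGroup.induction_on with | H b => ?_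
  refine eq_of_forall_isAtom_apply_eq ρ fun P hP f hf ↦ ?_
  obtain ⟨c, hc⟩ := exists_forall_apply_smul_eq ρ hdeg (hirr a) hP
  obtain ⟨d, hd⟩ := exists_forall_apply_smul_eq ρ hdeg (hirr b) hP
  have ha := hc f hf 1
  have hb := hd f hf 1
  rw [one_smul, one_smul] at ha hb
  have hab := hd f hf a
  have hba := hc f hf b
  simp only [MulAction.Quotient.smul_coe, smul_eq_mul, mul_one] at hab hba
  rw [← QuotientGroup.mk_mul, ← QuotientGroup.mk_mul, hab, hba, ha, hb, smul_comm]

lemma IsRigid.commutator_le (h : IsRigid k G n) {T : Subgroup G} (hT : T.index ≤ n) :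
    commutator G ≤ T := by
  have hstab (b : G) :
      MulAction.stabilizer G ((1 : G) : G ⧸ T) ≤ MulAction.stabilizer G (b : G ⧸ T) := by
    have hindex : (MulAction.stabilizer G ((1 : G) : G ⧸ T) ⊓
        MulAction.stabilizer G (b : G ⧸ T)).index ≤ n ^ 2 := by
      refine Subgroup.index_inf_le.trans ?_
      rw [MulAction.index_stabilizer_of_transitive, MulAction.index_stabilizer_of_transitive,
        ← Subgroup.index_eq_card, sq]
      exact Nat.mul_le_mul hT hT
    obtain ⟨ρ, hρ⟩ := h.exists_res_isIrreducible hindex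
    exact stabilizer_le_stabilizer ρ (by simpa using h.degreeLE) hρ
  have hnormal : T.Normal := ⟨fun t ht g ↦ by
    have := hstab g⁻¹ ((MulAction.stabilizer_quotient T).symm ▸ ht)
    rw [MulAction.mem_stabilizer_iff, eq_comm, MulAction.Quotient.smul_coe,
      QuotientGroup.eq] at this
    simpa [mul_assoc] using this⟩
  obtain ⟨ρ, hρ⟩ := h.exists_res_isIrreducible (K := T)
    (hT.trans (Nat.le_self_pow two_ne_zero n))
  exact commutator_le_of_res_isIrreducible ρ (by simpa using h.degreeLE) T

lemma IsRigid.commute_conj (h : IsRigid k G n) {g : G}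
    (hg : (Subgroup.centralizer {g}).index ≤ n ^ 2) (x : G) : Commute g (x * g * x⁻¹) := by
  obtain ⟨ρ, hρ⟩ := h.exists_res_isIrreducible hg
  have hfix := smul_eq_self_of_commute (Y := G ⧸ Subgroup.centralizer {g}) (y := ((1 : G) : _)) ρ
    (by simpa using h.degreeLE) (by rwa [MulAction.stabilizer_quotient]) (g := g)
    (by simp [MulAction.stabilizer_quotient, Subgroup.mem_centralizer_iff])
    (fun t ht ↦ by
      rw [MulAction.stabilizer_quotient] at ht
      exact Subgroup.mem_centralizer_singleton_iff.1 ht |>.symm) (x : _)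
  rw [eq_comm, MulAction.Quotient.smul_coe, QuotientGroup.eq, smul_eq_mul,
    Subgroup.mem_centralizer_singleton_iff] at hfix
  have hconj := congrArg (fun y ↦ x * y * x⁻¹) hfix
  simpa [Commute, SemiconjBy, mul_assoc] using hconj

end Rigid

section Weight

variable {k : Type*} [Field k] {H : Type*} [Group H] {V : Type*} [AddCommGroup V] [Module k V]

/-- The vectors on which `H` acts through the linear character `ν`. -/
def weightSpace (ρ : Representation k H V) (ν : H →* kˣ) : Submodule k V where
  carrier := {v | ∀ a, ρ a v = ν a • v}
  add_mem' hv hw a := by rw [map_add, hv, hw, smul_add]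
  zero_mem' a := by rw [map_zero, smul_zero]
  smul_mem' c v hv a := by rw [map_smul, hv, smul_comm]

lemma mem_weightSpace {ρ : Representation k H V} {ν : H →* kˣ} {v : V} :
    v ∈ weightSpace ρ ν ↔ ∀ a, ρ a v = ν a • v := Iff.rfl

lemma eq_zero_of_sum_weight_eq_zero (ρ : Representation k H V) {ι : Type*} [Fintype ι]
    {ν : ι → H →* kˣ} (hν : Function.Injective ν) {v : ι → V}
    (hv : ∀ i, v i ∈ weightSpace ρ (ν i)) (hsum : ∑ i, v i = 0) (i : ι) : v i = 0 := by
  have hind : LinearIndependent k fun i ↦ ((Units.coeHom k).comp (ν i) : H → k) :=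
    (linearIndependent_monoidHom H k).comp (fun i ↦ (Units.coeHom k).comp (ν i))
      fun i j hij ↦ hν (MonoidHom.ext fun a ↦ Units.ext (DFunLike.congr_fun hij a))
  refine (Module.forall_dual_apply_eq_zero_iff k _).1 fun φ ↦ ?_
  refine Fintype.linearIndependent_iff.1 hind (fun i ↦ φ (v i)) ?_ i
  ext a
  calc (∑ j, φ (v j) • ((Units.coeHom k).comp (ν j) : H → k)) a
    _ = ∑ j, φ (ν j a • v j) := by
      simp [Finset.sum_apply, Units.smul_def, mul_comm]
    _ = φ (ρ a (∑ j, v j)) := by simp only [map_sum, mem_weightSpace.1 (hv _) a]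
    _ = 0 := by rw [hsum, map_zero, map_zero]

lemma weightSpace_ne_bot [CharZero k] [Finite H] {ρ : Representation k H V} {ν : H →* kˣ}
    {α : V →ₗ[k] k} (hα0 : α ≠ 0) (hα : ∀ a v, α (ρ a v) = ν a • α v) :
    weightSpace ρ ν ≠ ⊥ := by
  let S : Subrepresentation ρ := ⟨LinearMap.ker α, fun a v hv ↦ by
    rw [LinearMap.mem_ker] at hv ⊢
    rw [hα, hv, smul_zero]⟩
  obtain ⟨Q, hQ⟩ := exists_isCompl S
  have hweight : Q.toSubmodule ≤ weightSpace ρ ν := fun v hv a ↦ by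
    have hmem : ρ a v - ν a • v ∈ S ⊓ Q :=
      ⟨by simp [S, hα], Q.toSubmodule.sub_mem (Q.apply_mem_toSubmodule a hv)
        (Q.toSubmodule.smul_mem _ hv)⟩
    rw [hQ.inf_eq_bot] at hmem
    exact sub_eq_zero.1 hmem
  intro hbot
  have hQbot : Q = ⊥ := Subrepresentation.toSubmodule_injective (le_bot_iff.1 (hbot ▸ hweight))
  have hS : S = ⊤ := by simpa [hQbot] using hQ.sup_eq_top
  exact hα0 (LinearMap.ker_eq_top.1 (congrArg Subrepresentation.toSubmodule hS))

/-- The one-dimensional representation afforded by a linear character. -/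
def ofCharacter (ν : H →* kˣ) : Representation k H k :=
  (Algebra.lmul k k : k →* End k k).comp ((Units.coeHom k).comp ν)

lemma ofCharacter_apply (ν : H →* kˣ) (a : H) (c : k) : ofCharacter ν a c = ν a • c := rfl

lemma exists_isIrreducible_weightSpace_ne_bot [CharZero k] [Finite H] {N : Subgroup H}
    (ν : N →* kˣ) :
    ∃ (d : ℕ) (τ : Representation k H (Fin d → k)),
      τ.IsIrreducible ∧ weightSpace (res τ N) ν ≠ ⊥ := by
  have := isIrreducible_of_finrank_eq_one (ofCharacter ν) (finrank_self k)
  obtain ⟨d, τ, β, hτ, hβ, hβν⟩ := exists_isIrreducible_surjective (ofCharacter ν)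
  refine ⟨d, τ, hτ, weightSpace_ne_bot (α := β) ?_ fun a v ↦ ?_⟩
  · rintro rfl
    obtain ⟨_, hv⟩ := hβ 1
    exact zero_ne_one hv
  · rw [hβν a v, Pi.one_apply, one_smul, ofCharacter_apply]

end Weight

section CharacterStabilizer

variable {k : Type*} [Field k] {G : Type*} [Group G] {N : Subgroup G} [N.Normal]

/-- The conjugate `a ↦ ν (x * a * x⁻¹)` of a linear character of a normal subgroup. -/
def conjCharacter (ν : N →* kˣ) (x : G) : N →* kˣ :=
  ν.comp (MulAut.conjNormal x).toMonoidHom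

lemma conjCharacter_apply (ν : N →* kˣ) (x : G) (a : N) :
    conjCharacter ν x a = ν (MulAut.conjNormal x a) := rfl

lemma conjCharacter_mul (ν : N →* kˣ) (x y : G) :
    conjCharacter ν (x * y) = conjCharacter (conjCharacter ν x) y := by
  ext a
  simp only [conjCharacter_apply, map_mul, MulAut.mul_apply]

lemma conjCharacter_one (ν : N →* kˣ) : conjCharacter ν 1 = ν := by
  ext a
  simp only [conjCharacter_apply, map_one, MulAut.one_apply]

/-- The inertia group of a linear character of a normal subgroup. -/
def characterStabilizer (ν : N →* kˣ) : Subgroup G where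
  carrier := {x | conjCharacter ν x = ν}
  one_mem' := conjCharacter_one ν
  mul_mem' {x y} hx hy := by
    rw [Set.mem_ofPred_eq] at hx hy ⊢
    rw [conjCharacter_mul, hx, hy]
  inv_mem' {x} hx := by
    rw [Set.mem_ofPred_eq] at hx ⊢
    conv_lhs => rw [← hx]
    rw [← conjCharacter_mul, mul_inv_cancel, conjCharacter_one]

lemma mem_characterStabilizer {ν : N →* kˣ} {x : G} :
    x ∈ characterStabilizer ν ↔ conjCharacter ν x = ν := Iff.rfl

lemma le_characterStabilizer (ν : N →* kˣ) : N ≤ characterStabilizer ν := by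
  intro x hx
  ext a
  have : MulAut.conjNormal x a = ⟨x, hx⟩ * a * ⟨x, hx⟩⁻¹ := Subtype.ext rfl
  rw [conjCharacter_apply, this, map_mul, map_mul, map_inv, mul_inv_cancel_comm]

lemma conjCharacter_out_inv_injective (ν : N →* kˣ) :
    Function.Injective fun q : G ⧸ characterStabilizer ν ↦ conjCharacter ν q.out⁻¹ := by
  intro p q hpq
  rw [← QuotientGroup.out_eq' p, ← QuotientGroup.out_eq' q, QuotientGroup.eq,
    mem_characterStabilizer, conjCharacter_mul]
  dsimp only at hpq
  rw [hpq, ← conjCharacter_mul, inv_mul_cancel, conjCharacter_one]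

variable {V : Type*} [AddCommGroup V] [Module k V] {ν : N →* kˣ}

lemma apply_mem_weightSpace (ρ : Representation k G V) {v : V}
    (hv : v ∈ weightSpace (res ρ N) ν) (x : G) :
    ρ x v ∈ weightSpace (res ρ N) (conjCharacter ν x⁻¹) := by
  intro a
  have hmul : (a : G) * x = x * (MulAut.conjNormal x⁻¹ a : N) := by
    simp [mul_assoc]
  calc ρ a (ρ x v) = ρ x (ρ (MulAut.conjNormal x⁻¹ a : N) v) := by
        rw [← Module.End.mul_apply, ← map_mul, hmul, map_mul, Module.End.mul_apply]
    _ = ρ x (ν (MulAut.conjNormal x⁻¹ a) • v) := congrArg (ρ x) (hv (MulAut.conjNormal x⁻¹ a))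
    _ = conjCharacter ν x⁻¹ a • ρ x v := by
      rw [LinearMap.map_smul_of_tower, conjCharacter_apply]

lemma apply_mem_weightSpace_of_mem_characterStabilizer (ρ : Representation k G V) {v : V}
    (hv : v ∈ weightSpace (res ρ N) ν) {x : G} (hx : x ∈ characterStabilizer ν) :
    ρ x v ∈ weightSpace (res ρ N) ν :=
  mem_characterStabilizer.1 ((characterStabilizer ν).inv_mem hx) ▸ apply_mem_weightSpace ρ hv x

variable [Finite G] [FiniteDimensional k V]

lemma index_mul_finrank_weightSpace_le (ρ : Representation k G V) (ν : N →* kˣ) :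
    (characterStabilizer ν).index * finrank k (weightSpace (res ρ N) ν) ≤ finrank k V := by
  let _ := Fintype.ofFinite (G ⧸ characterStabilizer ν)
  let Φ : (G ⧸ characterStabilizer ν → weightSpace (res ρ N) ν) →ₗ[k] V :=
    ∑ q, ρ q.out ∘ₗ (weightSpace (res ρ N) ν).subtype ∘ₗ LinearMap.proj q
  have hΦ : Function.Injective Φ := by
    refine (injective_iff_map_eq_zero Φ).2 fun f hf ↦ funext fun q ↦ Subtype.ext ?_
    refine (ρ.apply_bijective q.out).1 ?_
    rw [Pi.zero_apply, Submodule.coe_zero, map_zero]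
    refine eq_zero_of_sum_weight_eq_zero (res ρ N) (conjCharacter_out_inv_injective ν)
      (v := fun q ↦ ρ q.out (f q)) (fun q ↦ apply_mem_weightSpace ρ (f q).2 q.out) ?_ q
    simpa [Φ] using hf
  have hle := LinearMap.finrank_le_finrank_of_injective hΦ
  rwa [finrank_pi_fintype, Finset.sum_const, Finset.card_univ, smul_eq_mul,
    ← Nat.card_eq_fintype_card, ← Subgroup.index_eq_card] at hle

variable [CharZero k]

lemma DegreeLE.exists_isIrreducible_characterStabilizer {n : ℕ} (h : DegreeLE k G n)
    (ν : N →* kˣ) :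
    ∃ (d : ℕ) (σ : Representation k (characterStabilizer ν) (Fin d → k)), σ.IsIrreducible ∧
      (characterStabilizer ν).index * d ≤ n ∧
      ∀ (a : N) (u), σ ⟨a, le_characterStabilizer ν a.2⟩ u = ν a • u := by
  obtain ⟨m, τ, hτ, hne⟩ := exists_isIrreducible_weightSpace_ne_bot ν
  let S : Subrepresentation (res τ (characterStabilizer ν)) :=
    ⟨weightSpace (res τ N) ν, fun x _ hv ↦
      apply_mem_weightSpace_of_mem_characterStabilizer τ hv x.2⟩
  obtain ⟨P, hPS, hP⟩ := exists_isAtom_le (S := S) _ fun e ↦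
    hne (congrArg Subrepresentation.toSubmodule e)
  have := isIrreducible_of_isAtom hP
  let e := (finBasis k P.toSubmodule).equivFun
  refine ⟨_, transport e P.toRepresentation, inferInstance, ?_, fun a u ↦ ?_⟩
  · calc (characterStabilizer ν).index * finrank k P.toSubmodule
      _ ≤ (characterStabilizer ν).index * finrank k (weightSpace (res τ N) ν) :=
        Nat.mul_le_mul_left _ (Submodule.finrank_mono hPS)
      _ ≤ finrank k (Fin m → k) := index_mul_finrank_weightSpace_le τ ν
      _ ≤ n := h.finrank_le τ
  · have hweight : P.toRepresentation ⟨a, le_characterStabilizer ν a.2⟩ (e.symm u) =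
        ν a • e.symm u := Subtype.ext (hPS (e.symm u).2 a)
    refine (congrArg e hweight).trans ?_
    rw [Units.smul_def, map_smul, e.apply_symm_apply, Units.smul_def]

end CharacterStabilizer

section HomRepresentation

variable {k : Type*} [Field k] {G : Type*} [Group G]
  {U : Type*} [AddCommGroup U] [Module k U] {V : Type*} [AddCommGroup V] [Module k V]
  {τ : Representation k G U}

lemma isSeparating_applyₗ (τ : Representation k G U) (ρ : Representation k G V) [τ.IsIrreducible]
    {u : U} (hu : u ≠ 0) :
    IsSeparating (linHom τ ρ) (LinearMap.applyₗ u : (U →ₗ[k] V) →ₗ[k] V) := by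
  intro f hf
  have hker (g : G) : f (τ g u) = 0 := by
    refine (ρ.apply_bijective g⁻¹).1 ?_
    simpa [linHom_apply] using hf g⁻¹
  let S : Submodule k U := ⨅ g, LinearMap.ker (f ∘ₗ τ g)
  have hS (g : G) (v : U) (hv : v ∈ S) : τ g v ∈ S := by
    simp only [S, Submodule.mem_iInf, LinearMap.mem_ker, LinearMap.comp_apply] at hv ⊢
    intro x
    simpa using hv (x * g)
  ext v
  have hv : v ∈ S := mem_of_invariant τ S hS ((Submodule.mem_iInf _).2 hker) hu v
  simpa using (Submodule.mem_iInf _).1 hv 1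

lemma isTwistedIntertwining_applyₗ (ρ : Representation k G V) {K : Subgroup G} {χ : K → kˣ}
    {u : U} (hu : ∀ t : K, τ t u = χ t • u) :
    IsTwistedIntertwining χ⁻¹ (res (linHom τ ρ) K) (res ρ K)
      (LinearMap.applyₗ u : (U →ₗ[k] V) →ₗ[k] V) := by
  intro t f
  have hinv : τ (t : G)⁻¹ u = (χ t)⁻¹ • u := by
    rw [eq_inv_smul_iff, ← LinearMap.map_smul_of_tower, ← hu, inv_self_apply]
  simp [linHom_apply, hinv, LinearMap.map_smul_of_tower]

lemma eq_zero_of_forall_mem_apply_eq_zero {ρ : Representation k G V} [τ.IsIrreducible]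
    {P : Subrepresentation (linHom τ ρ)} (hP : IsAtom P) {u : U} (hu : ∀ f ∈ P, f u = 0) :
    u = 0 := by
  by_contra hu0
  exact (isSeparating_applyₗ τ ρ hu0).domRestrict_ne_zero hP (LinearMap.ext fun f ↦ hu f f.2)

lemma IsTwistedIntertwining.det_eq {χ : G → kˣ} {σ : Representation k G U}
    {ρ : Representation k G V} {α : U →ₗ[k] V} (hα : IsTwistedIntertwining χ σ ρ α)
    (hbij : Function.Bijective α) (g : G) :
    LinearMap.det (σ g) = (χ g : k) ^ finrank k V * LinearMap.det (ρ g) := by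
  let e := LinearEquiv.ofBijective α hbij
  have hconj : (e : U →ₗ[k] V) ∘ₗ σ g ∘ₗ (e.symm : V →ₗ[k] U) = (χ g : k) • ρ g := by
    ext v
    calc α (σ g (e.symm v)) = χ g • ρ g (e (e.symm v)) := hα g _
      _ = (χ g : k) • ρ g v := by rw [e.apply_symm_apply, Units.smul_def]
  rw [← LinearMap.det_conj (σ g) e, hconj, LinearMap.det_smul]

variable [CharZero k] [Finite G] [FiniteDimensional k U] [FiniteDimensional k V]

lemma pow_eq_pow_of_weight [τ.IsIrreducible] (ρ : Representation k G V)
    (hdeg : DegreeLE k G (finrank k V)) {K : Subgroup G} [(res ρ K).IsIrreducible]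
    {χ χ' : K → kˣ} {u u' : U} (hu0 : u ≠ 0) (hu : ∀ t : K, τ t u = χ t • u) (hu'0 : u' ≠ 0)
    (hu' : ∀ t : K, τ t u' = χ' t • u') (t : K) : χ t ^ finrank k V = χ' t ^ finrank k V := by
  have := nontrivial_of_isIrreducible τ
  have := nontrivial_of_isIrreducible (res ρ K)
  obtain ⟨P, hP⟩ := exists_isAtom (linHom τ ρ)
  have hdet {χ : K → kˣ} {u : U} (hu0 : u ≠ 0) (hu : ∀ t : K, τ t u = χ t • u) :=
    IsTwistedIntertwining.det_eq (σ := res P.toRepresentation K)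
      (fun g f ↦ isTwistedIntertwining_applyₗ ρ hu g f)
      ⟨(isSeparating_applyₗ τ ρ hu0).injective (isTwistedIntertwining_applyₗ ρ hu) hP
          (hdeg.finrank_le_of_isAtom hP),
        (isSeparating_applyₗ τ ρ hu0).surjective (isTwistedIntertwining_applyₗ ρ hu) hP⟩ t
  have hρ : LinearMap.det (res ρ K t) ≠ 0 :=
    ((LinearMap.det.comp (res ρ K)).toHomUnits t).ne_zero
  have heq := mul_right_cancel₀ hρ ((hdet hu0 hu).symm.trans (hdet hu'0 hu'))
  simpa [← Units.val_pow_eq_pow_val, Units.val_inj] using heq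

variable [IsAlgClosed k]

lemma exists_eq_smul_of_weight [τ.IsIrreducible] (ρ : Representation k G V)
    (hdeg : DegreeLE k G (finrank k V)) {K : Subgroup G} [(res ρ K).IsIrreducible]
    {χ : K → kˣ} {u u' : U} (hu0 : u ≠ 0) (hu : ∀ t : K, τ t u = χ t • u)
    (hu' : ∀ t : K, τ t u' = χ t • u') : ∃ c : k, c • u = u' := by
  have := nontrivial_of_isIrreducible τ
  have := nontrivial_of_isIrreducible (res ρ K)
  obtain ⟨P, hP⟩ := exists_isAtom (linHom τ ρ)
  have hdim : finrank k P.toSubmodule < 2 * finrank k V := by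
    have := hdeg.pos
    have := hdeg.finrank_le_of_isAtom hP
    omega
  obtain ⟨c, hc⟩ := (isSeparating_applyₗ τ ρ hu0).exists_eq_smul
    (isTwistedIntertwining_applyₗ ρ hu) (isTwistedIntertwining_applyₗ ρ hu') hP hdim
  refine ⟨c, (sub_eq_zero.1 (eq_zero_of_forall_mem_apply_eq_zero hP fun f hf ↦ ?_)).symm⟩
  simpa [sub_eq_zero] using hc f hf

end HomRepresentation

section ScalarSubgroup

open scoped commutatorElement

variable {k : Type*} [Field k] {G : Type*} [Group G]
  {V : Type*} [AddCommGroup V] [Module k V] {ρ : Representation k G V}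

/-- The elements acting as scalars, the centre `Z(χ)` of the character `χ` of `ρ`. -/
def scalarSubgroup (ρ : Representation k G V) : Subgroup G :=
  (Units.map (algebraMap k (End k V) : k →* End k V)).range.comap ρ.toHomUnits

lemma mem_scalarSubgroup {g : G} : g ∈ scalarSubgroup ρ ↔ ∃ c : kˣ, ∀ v, ρ g v = c • v := by
  refine exists_congr fun c ↦ ?_
  rw [Units.ext_iff, LinearMap.ext_iff]
  exact forall_congr' fun v ↦ eq_comm

variable [IsAlgClosed k] [FiniteDimensional k V]

lemma mem_scalarSubgroup_of_commute [ρ.IsIrreducible] {t : G}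
    (ht : ∀ y, Commute (ρ t) (ρ y)) : t ∈ scalarSubgroup ρ := by
  obtain ⟨c, hc⟩ := exists_eq_smul_of_commute ρ (ρ t) fun y v ↦ LinearMap.congr_fun (ht y).eq v
  have := nontrivial_of_isIrreducible ρ
  obtain ⟨v, hv⟩ := exists_ne (0 : V)
  have hc0 : c ≠ 0 := by
    rintro rfl
    refine hv ((ρ.apply_bijective t).1 ?_)
    rw [hc, zero_smul, map_zero]
  exact mem_scalarSubgroup.2 ⟨Units.mk0 c hc0, hc⟩

lemma trace_eq_zero_of_notMem_scalarSubgroup [ρ.IsIrreducible]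
    (hcomm : commutator G ≤ scalarSubgroup ρ) {t : G} (ht : t ∉ scalarSubgroup ρ) :
    LinearMap.trace k V (ρ t) = 0 := by
  obtain ⟨y, hy⟩ := not_forall.1 (mt mem_scalarSubgroup_of_commute ht)
  obtain ⟨c, hc⟩ := mem_scalarSubgroup.1 (hcomm (Subgroup.commutator_mem_commutator
    (Subgroup.mem_top y) (Subgroup.mem_top t)))
  have hconj : ρ (y * t * y⁻¹) = (c : k) • ρ t := by
    ext v
    calc ρ (y * t * y⁻¹) v = ρ ⁅y, t⁆ (ρ t v) := by
          rw [← Module.End.mul_apply, ← map_mul, commutatorElement_def, inv_mul_cancel_right]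
      _ = (c : k) • ρ t v := hc _
  have hc1 : (c : k) ≠ 1 := by
    intro h
    refine hy (Eq.symm ?_)
    rw [h, one_smul] at hconj
    rw [← map_mul, ← map_mul, ← inv_mul_cancel_right (y * t) y, map_mul, hconj, ← map_mul]
  have htrace : LinearMap.trace k V (ρ (y * t * y⁻¹)) = LinearMap.trace k V (ρ t) := by
    rw [map_mul, LinearMap.trace_mul_comm, ← map_mul, inv_mul_cancel_left]
  rw [hconj, map_smul, smul_eq_mul] at htrace
  exact of_not_not fun h0 ↦ hc1 ((mul_eq_right₀ h0).1 htrace)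

variable [CharZero k] [Finite G]

lemma index_scalarSubgroup_le [ρ.IsIrreducible]
    (hcomm : commutator G ≤ scalarSubgroup ρ) :
    (scalarSubgroup ρ).index ≤ finrank k V ^ 2 := by
  let _ := Fintype.ofFinite (G ⧸ scalarSubgroup ρ)
  have := nontrivial_of_isIrreducible ρ
  have hind : LinearIndependent k fun q : G ⧸ scalarSubgroup ρ ↦ ρ q.out := by
    refine Fintype.linearIndependent_iff.2 fun a ha p ↦ ?_
    have hoff (q) (hq : q ≠ p) : LinearMap.trace k V (ρ (p.out⁻¹ * q.out)) = 0 :=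
      trace_eq_zero_of_notMem_scalarSubgroup hcomm fun hmem ↦
        hq (by simpa using (QuotientGroup.eq.2 hmem).symm)
    have htrace : LinearMap.trace k V (ρ p.out⁻¹ * ∑ q, a q • ρ q.out) = a p * finrank k V := by
      simp only [Finset.mul_sum, mul_smul_comm, ← map_mul, map_sum, map_smul, smul_eq_mul]
      rw [Finset.sum_eq_single p (fun q _ hq ↦ by rw [hoff q hq, mul_zero]) (by simp),
        inv_mul_cancel, map_one, LinearMap.trace_one]
    rw [ha, mul_zero, map_zero, eq_comm, mul_eq_zero, Nat.cast_eq_zero] at htrace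
    exact htrace.resolve_right (finrank_pos (R := k) (M := V)).ne'
  have hcard := hind.fintype_card_le_finrank
  rwa [finrank_linearMap, ← sq, ← Nat.card_eq_fintype_card, ← Subgroup.index_eq_card] at hcard

lemma DegreeLE.scalarSubgroup_pred [ρ.IsIrreducible] {n : ℕ} (h : DegreeLE k G n)
    (hdim : 2 ≤ finrank k V) : DegreeLE k (scalarSubgroup ρ) (n - 1) := by
  by_contra hK
  obtain ⟨σ, hσ⟩ := h.exists_res_isIrreducible hK
  have := nontrivial_of_isIrreducible ρ
  obtain ⟨u, hu⟩ := exists_ne (0 : V)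
  choose χ hχ using fun t : scalarSubgroup ρ ↦ mem_scalarSubgroup.1 t.2
  have := finrank_le_one u fun u' ↦ exists_eq_smul_of_weight σ (by simpa using h) hu
    (fun t ↦ hχ t u) fun t ↦ hχ t u'
  omega

end ScalarSubgroup

section RigidCharacter

open scoped IsMulCommutative

variable {k : Type*} [Field k] {G : Type*} [Group G] {n : ℕ}

lemma DegreeLE.map {G' : Type*} [Group G'] {K : Subgroup G} (h : DegreeLE k K n) (φ : G →* G') :
    DegreeLE k (K.map φ) n :=
  h.of_surjective (φ.subgroupMap_surjective K)

lemma index_ker_le_of_pow_eq_one (hn : 0 < n) {κ : G →* kˣ} (hκ : ∀ g, κ g ^ n = 1) :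
    κ.ker.index ≤ n := by
  have : NeZero n := ⟨hn.ne'⟩
  rw [Subgroup.index_ker]
  refine (Subgroup.card_le_of_le (K := rootsOfUnity n k) ?_).trans (card_rootsOfUnity k n)
  rintro _ ⟨g, rfl⟩
  exact hκ g

variable [CharZero k] [Finite G] [IsAlgClosed k]

lemma mem_commutator_of_forall_character {g : G} (hg : ∀ ν : G →* kˣ, ν g = 1) :
    g ∈ commutator G := by
  have hof : Abelianization.of g = 1 :=
    (CommGroup.forall_apply_eq_apply_iff _).1 fun φ : Abelianization G →* kˣ ↦
      (hg (φ.comp Abelianization.of)).trans (map_one φ).symm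
  exact (QuotientGroup.eq_one_iff g).1 hof

lemma IsRigid.commutator_le_characterStabilizer (h : IsRigid k G n) {N : Subgroup G} [N.Normal]
    (ν : N →* kˣ) : commutator G ≤ characterStabilizer ν := by
  obtain ⟨d, σ, hσ, hindex, -⟩ := h.degreeLE.exists_isIrreducible_characterStabilizer ν
  have := nontrivial_of_isIrreducible σ
  have hd : 0 < d := by simpa using finrank_pos (R := k) (M := Fin d → k)
  exact h.commutator_le ((Nat.le_mul_of_pos_right _ hd).trans hindex)

lemma IsRigid.character_eq_of_weight (h : IsRigid k G n) {T : Subgroup G} (hT : T.index ≤ n)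
    {U : Type*} [AddCommGroup U] [Module k U] [FiniteDimensional k U] {τ : Representation k G U}
    [τ.IsIrreducible] {μ μ' : T →* kˣ} {u u' : U} (hu : u ∈ weightSpace (res τ T) μ) (hu0 : u ≠ 0)
    (hu' : u' ∈ weightSpace (res τ T) μ') (hu'0 : u' ≠ 0) : μ = μ' := by
  let κ : T →* kˣ := μ / μ'
  have hκ (t : T) : κ t ^ n = 1 := by
    obtain ⟨ρ, hρ⟩ := h.exists_res_isIrreducible (hT.trans (Nat.le_self_pow two_ne_zero n))
    have hpow := pow_eq_pow_of_weight ρ (by simpa using h.degreeLE) hu0 hu hu'0 hu' t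
    rwa [finrank_fin_fun, ← div_eq_one, ← div_pow] at hpow
  let L : Subgroup G := κ.ker.map T.subtype
  have hLT : L ≤ T := Subgroup.map_subtype_le _
  have hL : L.index ≤ n ^ 2 := by
    rw [Subgroup.index_map_subtype, sq]
    exact Nat.mul_le_mul (index_ker_le_of_pow_eq_one h.degreeLE.pos hκ) hT
  have hagree (t : L) : μ' ⟨t, hLT t.2⟩ = μ ⟨t, hLT t.2⟩ := by
    obtain ⟨_, ⟨t, ht, rfl⟩⟩ := t
    exact (div_eq_one.1 ht).symm
  obtain ⟨ρ, hρ⟩ := h.exists_res_isIrreducible hL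
  obtain ⟨c, rfl⟩ := exists_eq_smul_of_weight ρ (by simpa using h.degreeLE) hu0
    (χ := fun t : L ↦ μ ⟨t, hLT t.2⟩) (fun t ↦ hu ⟨t, hLT t.2⟩)
    (fun t ↦ (hu' ⟨t, hLT t.2⟩).trans (by rw [hagree]))
  ext t
  exact smul_left_injective k hu'0 (((weightSpace (res τ T) μ).smul_mem c hu t).symm.trans (hu' t))

lemma IsRigid.conjCharacter_eq (h : IsRigid k G n) {T : Subgroup G} [T.Normal]
    (hT : T.index ≤ n) (μ : T →* kˣ) (x : G) : conjCharacter μ x = μ := by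
  obtain ⟨d, τ, hτ, hne⟩ := exists_isIrreducible_weightSpace_ne_bot μ
  obtain ⟨u, hu, hu0⟩ := Submodule.exists_mem_ne_zero_of_ne_bot hne
  have hxu : τ x⁻¹ u ∈ weightSpace (res τ T) (conjCharacter μ x) := by
    simpa using apply_mem_weightSpace τ hu x⁻¹
  have hxu0 : τ x⁻¹ u ≠ 0 := fun h0 ↦ hu0 ((τ.apply_bijective x⁻¹).1 (h0.trans (map_zero _).symm))
  exact h.character_eq_of_weight hT hxu hxu0 hu hu0

lemma IsRigid.finrank_le_one (h : IsRigid k G n) {T : Subgroup G} {V : Type*} [AddCommGroup V]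
    [Module k V] [FiniteDimensional k V] {σ : Representation k T V} [σ.IsIrreducible]
    (hcomm : commutator T ≤ scalarSubgroup σ) (hdim : T.index * finrank k V ≤ n) :
    finrank k V ≤ 1 := by
  by_contra! hV
  refine h.not_degreeLE ((scalarSubgroup σ).map T.subtype) ?_
    (((h.degreeLE.subgroup T).scalarSubgroup_pred hV).map _)
  have hT : T.index ≤ T.index ^ 2 := Nat.le_self_pow two_ne_zero _
  calc ((scalarSubgroup σ).map T.subtype).index
    _ = (scalarSubgroup σ).index * T.index := Subgroup.index_map_subtype _
    _ ≤ finrank k V ^ 2 * T.index ^ 2 := Nat.mul_le_mul (index_scalarSubgroup_le hcomm) hT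
    _ = (T.index * finrank k V) ^ 2 := by ring
    _ ≤ n ^ 2 := Nat.pow_le_pow_left hdim 2

lemma IsRigid.exists_extension (h : IsRigid k G n) (ν : commutator G →* kˣ) :
    (characterStabilizer ν).index ≤ n ∧ ∃ μ : characterStabilizer ν →* kˣ,
      ∀ a : commutator G, μ ⟨a, le_characterStabilizer ν a.2⟩ = ν a := by
  obtain ⟨d, σ, hσ, hindex, hσν⟩ := h.degreeLE.exists_isIrreducible_characterStabilizer ν
  have hcomm : commutator (characterStabilizer ν) ≤ scalarSubgroup σ := by
    intro t ht
    have ht' : (t : G) ∈ commutator G := Subgroup.commutator_mono le_top le_top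
      (Subgroup.map_subtype_commutator (characterStabilizer ν) ▸ Subgroup.mem_map_of_mem _ ht)
    exact mem_scalarSubgroup.2 ⟨ν ⟨t, ht'⟩, hσν ⟨t, ht'⟩⟩
  have := nontrivial_of_isIrreducible σ
  have hle := h.finrank_le_one hcomm (by simpa using hindex)
  have hpos := finrank_pos (R := k) (M := Fin d → k)
  rw [finrank_fin_fun] at hle hpos
  obtain rfl : d = 1 := by omega
  refine ⟨by simpa using hindex, (LinearMap.det.comp σ).toHomUnits, fun a ↦ Units.ext ?_⟩
  have hscalar : σ ⟨a, le_characterStabilizer ν a.2⟩ = (ν a : k) • LinearMap.id :=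
    LinearMap.ext fun u ↦ hσν a u
  change LinearMap.det (σ ⟨a, le_characterStabilizer ν a.2⟩) = _
  rw [hscalar, LinearMap.det_smul, LinearMap.det_id, finrank_fin_fun, pow_one, mul_one]

lemma IsRigid.character_commutator_eq_one (h : IsRigid k G n) (ν : commutator G →* kˣ) :
    ν = 1 := by
  obtain ⟨hindex, μ, hμ⟩ := h.exists_extension ν
  have := Subgroup.Normal.of_commutator_le G (le_characterStabilizer ν)
  have htop (x : G) : x ∈ characterStabilizer ν := by
    ext a
    have hμx := DFunLike.congr_fun (h.conjCharacter_eq hindex μ x)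
      ⟨a, le_characterStabilizer ν a.2⟩
    rw [hμ, conjCharacter_apply] at hμx
    rw [conjCharacter_apply, ← hμ, ← hμx]
    rfl
  ext a
  have hker := Abelianization.commutator_subset_ker
    (μ.comp ((MonoidHom.id G).codRestrict (characterStabilizer ν) htop)) a.2
  rw [← hμ]
  exact congrArg Units.val hker

lemma IsRigid.isPerfect_commutator (h : IsRigid k G n) : Group.IsPerfect (commutator G) :=
  ⟨(Subgroup.eq_top_iff' _).2 fun a ↦ mem_commutator_of_forall_character (k := k) fun ν ↦ by
    rw [h.character_commutator_eq_one ν, MonoidHom.one_apply]⟩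

lemma IsRigid.mem_centralizer_commutator (h : IsRigid k G n) {g : G}
    (hg : (Subgroup.centralizer {g}).index ≤ n ^ 2) :
    g ∈ Subgroup.centralizer (commutator G : Set G) := by
  have hconj : ∀ a ∈ Group.conjugatesOfSet {g}, ∀ b ∈ Group.conjugatesOfSet {g},
      a * b = b * a := by
    simp only [Group.mem_conjugatesOfSet_iff, Set.mem_singleton_iff, exists_eq_left, isConj_iff]
    rintro _ ⟨x, rfl⟩ _ ⟨y, rfl⟩
    have := congrArg (MulAut.conj x) (h.commute_conj hg (x⁻¹ * y)).eq
    simpa [mul_assoc] using this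
  have hcomm : IsMulCommutative (Subgroup.normalClosure {g}) :=
    Subgroup.isMulCommutative_closure hconj
  refine Subgroup.mem_centralizer_iff.2 fun x hx ↦ ?_
  let a : Subgroup.normalClosure {g} := ⟨g, Subgroup.subset_normalClosure rfl⟩
  have hfix : MulAut.conjNormal x a = a := by
    refine (CommGroup.forall_apply_eq_apply_iff _).1 fun ν : Subgroup.normalClosure {g} →* kˣ ↦ ?_
    exact DFunLike.congr_fun (h.commutator_le_characterStabilizer ν hx) a
  exact mul_inv_eq_iff_eq_mul.1 (congrArg Subtype.val hfix)

end RigidCharacter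

section ClassNumber

lemma finrank_monoidAlgebra (k : Type*) [Field k] (G : Type*) [Finite G] :
    finrank k (MonoidAlgebra k G) = Nat.card G := by
  have := Fintype.ofFinite G
  rw [(MonoidAlgebra.coeffLinearEquiv k).finrank_eq, finrank_finsupp_self,
    Nat.card_eq_fintype_card]

variable {k : Type*} [Field k] {G : Type*} [Group G] {n : ℕ}

lemma DegreeLE.finrank_le_of_algHom_surjective (h : DegreeLE k G n) {V : Type*} [AddCommGroup V]
    [Module k V] [FiniteDimensional k V] [Nontrivial V] {ψ : MonoidAlgebra k G →ₐ[k] Module.End k V}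
    (hψ : Function.Surjective ψ) : finrank k V ≤ n := by
  let ρ : Representation k G V := (ψ : MonoidAlgebra k G →* Module.End k V).comp
    (MonoidAlgebra.of k G)
  have : ρ.IsIrreducible := by
    refine isIrreducible_of_invariant fun S hS ↦ or_iff_not_imp_left.2 fun hbot ↦ ?_
    have hψS (a : MonoidAlgebra k G) {v : V} (hv : v ∈ S) : ψ a v ∈ S := by
      induction a using MonoidAlgebra.induction_on with
      | of g => exact hS g v hv
      | add a b ha hb => simpa using S.add_mem ha hb
      | smul c a ha => simpa using S.smul_mem c ha
    obtain ⟨v, hv, hv0⟩ := Submodule.exists_mem_ne_zero_of_ne_bot hbot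
    obtain ⟨f, hf⟩ := Module.Projective.exists_dual_eq_one k hv0
    refine (Submodule.eq_top_iff').2 fun w ↦ ?_
    obtain ⟨a, ha⟩ := hψ (f.smulRight w)
    simpa [ha, hf] using hψS a hv
  exact h.finrank_le ρ

lemma coeff_eq_of_isConj {a : MonoidAlgebra k G} (ha : a ∈ Subalgebra.center k (MonoidAlgebra k G))
    {x y : G} (hxy : IsConj x y) : a.coeff x = a.coeff y := by
  obtain ⟨g, rfl⟩ := isConj_iff.1 hxy
  have hcoeff := congrArg (fun b : MonoidAlgebra k G ↦ b.coeff (g * x))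
    (Subalgebra.mem_center_iff.1 ha (MonoidAlgebra.of k G g))
  simpa [MonoidAlgebra.coeff_mul_single_apply, MonoidAlgebra.coeff_single_mul_apply] using hcoeff

variable [Finite G]

lemma finrank_center_monoidAlgebra_le :
    finrank k (Subalgebra.center k (MonoidAlgebra k G)) ≤ Nat.card (ConjClasses G) := by
  have := Fintype.ofFinite (ConjClasses G)
  let F : Subalgebra.center k (MonoidAlgebra k G) →ₗ[k] ConjClasses G → k :=
    { toFun := fun a c ↦ a.1.coeff c.out
      map_add' := fun a b ↦ by ext; simp
      map_smul' := fun c a ↦ by ext; simp }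
  have hF : Function.Injective F := by
    refine fun a b hab ↦ Subtype.ext (MonoidAlgebra.ext (Finsupp.ext fun g ↦ ?_))
    have hg : IsConj (Quotient.out (ConjClasses.mk g)) g := Quotient.mk_out (s := IsConj.setoid G) g
    rw [← coeff_eq_of_isConj a.2 hg, ← coeff_eq_of_isConj b.2 hg]
    exact congrFun hab (ConjClasses.mk g)
  simpa [Nat.card_eq_fintype_card] using LinearMap.finrank_le_finrank_of_injective hF

lemma card_le_finrank_center_of_algEquiv_pi {ι : Type*} [Fintype ι] {A : Type*} [Ring A]
    [Algebra k A] [FiniteDimensional k A] {B : ι → Type*} [∀ i, Ring (B i)] [∀ i, Algebra k (B i)]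
    [∀ i, Nontrivial (B i)] (φ : A ≃ₐ[k] Π i, B i) :
    Fintype.card ι ≤ finrank k (Subalgebra.center k A) := by
  let F : (ι → k) →ₗ[k] A :=
    φ.symm.toLinearMap ∘ₗ LinearMap.piMap fun i ↦ Algebra.linearMap k (B i)
  have hF (a : ι → k) : F a ∈ Subalgebra.center k A := by
    refine Subalgebra.mem_center_iff.2 fun b ↦ φ.injective (funext fun i ↦ ?_)
    simp [F, Algebra.commutes]
  have hinj : Function.Injective (F.codRestrict (Subalgebra.center k A).toSubmodule hF) := by
    refine fun a b hab ↦ funext fun i ↦ FaithfulSMul.algebraMap_injective k (B i) ?_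
    exact congrFun (φ.symm.injective (congrArg Subtype.val hab)) i
  simpa using LinearMap.finrank_le_finrank_of_injective hinj

lemma DegreeLE.card_le [IsAlgClosed k] [CharZero k] (h : DegreeLE k G n) :
    Nat.card G ≤ n ^ 2 * Nat.card (ConjClasses G) := by
  have : NeZero (Nat.card G : k) := ⟨Nat.cast_ne_zero.2 Nat.card_pos.ne'⟩
  obtain ⟨m, d, hd, ⟨φ⟩⟩ :=
    IsSemisimpleRing.exists_algEquiv_pi_matrix_of_isAlgClosed k (MonoidAlgebra k G)
  have hdn (i : Fin m) : d i ≤ n := by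
    let ψ : MonoidAlgebra k G →ₐ[k] Module.End k (Fin (d i) → k) :=
      (Matrix.toLinAlgEquiv' : _ ≃ₐ[k] Module.End k (Fin (d i) → k)).toAlgHom.comp
        ((Pi.evalAlgHom k _ i).comp φ.toAlgHom)
    have hψ : Function.Surjective ψ :=
      Matrix.toLinAlgEquiv'.surjective.comp ((Function.surjective_eval i).comp φ.surjective)
    simpa using h.finrank_le_of_algHom_surjective hψ
  have hm : m ≤ Nat.card (ConjClasses G) := by
    simpa using (card_le_finrank_center_of_algEquiv_pi φ).trans finrank_center_monoidAlgebra_le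
  calc Nat.card G
    _ = ∑ i, d i * d i := by
      rw [← finrank_monoidAlgebra k G, φ.toLinearEquiv.finrank_eq, finrank_pi_fintype]
      simp [finrank_matrix]
    _ ≤ ∑ _ : Fin m, n * n := Finset.sum_le_sum fun i _ ↦ Nat.mul_le_mul (hdn i) (hdn i)
    _ = n ^ 2 * m := by simp [sq, mul_comm]
    _ ≤ n ^ 2 * Nat.card (ConjClasses G) := Nat.mul_le_mul_left _ hm

lemma card_commute_eq_sum_card_centralizer [Fintype G] :
    Nat.card {p : G × G // Commute p.1 p.2} = ∑ g : G, Nat.card (Subgroup.centralizer {g}) := by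
  rw [← Nat.card_sigma]
  exact Nat.card_congr
    { toFun := fun p ↦ ⟨p.1.1, p.1.2, Subgroup.mem_centralizer_singleton_iff.2 p.2.symm⟩
      invFun := fun p ↦ ⟨(p.1, p.2), (Subgroup.mem_centralizer_singleton_iff.1 p.2.2).symm⟩
      left_inv := fun _ ↦ rfl
      right_inv := fun _ ↦ rfl }

lemma mul_card_conjClasses_le {m : ℕ} {C : Subgroup G}
    (hC : ∀ g, (Subgroup.centralizer {g}).index ≤ m → g ∈ C) :
    (m + 1) * Nat.card (ConjClasses G) ≤ m * Nat.card C + Nat.card G := by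
  classical
  have := Fintype.ofFinite G
  have hcard (g : G) : (m + 1) * Nat.card (Subgroup.centralizer {g}) ≤
      (if g ∈ C then m * Nat.card G else 0) + Nat.card G := by
    split_ifs with hg
    · rw [← Nat.succ_mul]
      exact Nat.mul_le_mul_left _ (Subgroup.card_le_card_group _)
    · rw [zero_add, ← (Subgroup.centralizer {g}).index_mul_card]
      exact Nat.mul_le_mul_right _ (not_le.1 (mt (hC g) hg))
  refine Nat.le_of_mul_le_mul_right ?_ (Nat.card_pos (α := G))
  calc (m + 1) * Nat.card (ConjClasses G) * Nat.card G
    _ = ∑ g : G, (m + 1) * Nat.card (Subgroup.centralizer {g}) := by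
      rw [mul_assoc, ← card_comm_eq_card_conjClasses_mul_card, card_commute_eq_sum_card_centralizer,
        Finset.mul_sum]
    _ ≤ ∑ g : G, ((if g ∈ C then m * Nat.card G else 0) + Nat.card G) :=
      Finset.sum_le_sum fun g _ ↦ hcard g
    _ = (m * Nat.card C + Nat.card G) * Nat.card G := by
      simp only [Finset.sum_add_distrib, ← Finset.sum_filter, Finset.sum_const, smul_eq_mul,
        Finset.card_univ, Nat.card_eq_fintype_card, Fintype.card_subtype]
      ring

lemma index_le_sq_of_card_le {m : ℕ} (hG : Nat.card G ≤ m * Nat.card (ConjClasses G))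
    {C : Subgroup G} (hC : ∀ g, (Subgroup.centralizer {g}).index ≤ m → g ∈ C) :
    C.index ≤ m ^ 2 := by
  refine Nat.le_of_mul_le_mul_right ?_ (Nat.card_pos (α := C))
  rw [C.index_mul_card]
  have hconj := Nat.mul_le_mul_left m (mul_card_conjClasses_le hC)
  nlinarith

lemma IsRigid.index_centralizer_commutator_le [IsAlgClosed k] [CharZero k] (h : IsRigid k G n) :
    (Subgroup.centralizer (commutator G : Set G)).index ≤ n ^ 4 :=
  (index_le_sq_of_card_le h.degreeLE.card_le fun _ ↦ h.mem_centralizer_commutator).trans_eq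
    (pow_mul n 2 2).symm

end ClassNumber

section Perfect

open scoped commutatorElement

variable {k : Type*} [Field k] {G : Type*} [Group G] {n : ℕ}

lemma apply_eq_of_isPerfect {X W : Type*} [AddCommGroup X] [Module k X] [AddCommGroup W]
    [Module k W] {σ : Representation k G X} {α : X →ₗ[k] W} {P : Subrepresentation σ}
    {D : Subgroup G} [Group.IsPerfect D]
    (hα : ∀ d ∈ D, ∃ c : k, ∀ x ∈ P, α (σ d x) = c • α x) {d : G} (hd : d ∈ D) {x : X}
    (hx : x ∈ P) : α (σ d x) = α x := by
  have hP (g : G) {x : X} (hx : x ∈ P) : σ g x ∈ P := P.apply_mem_toSubmodule g hx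
  rw [← Subgroup.commutator_eq_self (H := D), Subgroup.commutator_def] at hd
  induction hd using Subgroup.closure_induction generalizing x with
  | mem d hd =>
    obtain ⟨a, ha, b, hb, rfl⟩ := hd
    obtain ⟨r, hr⟩ := hα a ha
    obtain ⟨s, hs⟩ := hα b hb
    have hy : σ (b * a)⁻¹ x ∈ P := hP _ hx
    calc α (σ ⁅a, b⁆ x)
      _ = α (σ a (σ b (σ (b * a)⁻¹ x))) := by
        simp only [← Module.End.mul_apply, ← map_mul, commutatorElement_def]
        group
      _ = α (σ b (σ a (σ (b * a)⁻¹ x))) := by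
        rw [hr _ (hP b hy), hs _ hy, hs _ (hP a hy), hr _ hy, smul_comm]
      _ = α x := by
        simp only [← Module.End.mul_apply, ← map_mul, mul_inv_rev, mul_inv_cancel_left,
          mul_inv_cancel, map_one, Module.End.one_apply]
  | one => simp
  | mul a b _ _ iha ihb => rw [map_mul, Module.End.mul_apply, iha (hP b hx), ihb hx]
  | inv a _ iha => rw [← iha (hP a⁻¹ hx), self_inv_apply]

lemma apply_eq_self_of_isPerfect_of_finrank_eq_one [Group.IsPerfect G] {V : Type*}
    [AddCommGroup V] [Module k V] {ρ : Representation k G V}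
    {L : Subrepresentation ρ} (hL : finrank k L.toSubmodule = 1) {v : V} (hv : v ∈ L) (g : G) :
    ρ g v = v := by
  refine apply_eq_of_isPerfect (α := LinearMap.id) (D := ⊤) (P := L) (fun d _ ↦ ?_) trivial hv
  obtain ⟨c, hc, -⟩ := LinearMap.existsUnique_eq_smul_id_of_finrank_eq_one hL
    (L.toRepresentation d)
  exact ⟨c, fun x hx ↦ congrArg Subtype.val (LinearMap.congr_fun hc ⟨x, hx⟩)⟩

lemma le_of_forall_sq_mem {C D : Subgroup G} [Group.IsPerfect D] (hC : ∀ g ∈ D, g ^ 2 ∈ C) :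
    D ≤ C := by
  rw [← Subgroup.commutator_eq_self (H := D), Subgroup.commutator_le]
  intro a ha b hb
  have hcomm : ⁅a, b⁆ = (a * b) ^ 2 * (b⁻¹ * a⁻¹ * b) ^ 2 * b⁻¹ ^ 2 := by
    simp only [commutatorElement_def, pow_two]
    group
  rw [hcomm]
  exact C.mul_mem (C.mul_mem (hC _ (D.mul_mem ha hb))
    (hC _ (D.mul_mem (D.mul_mem (D.inv_mem hb) (D.inv_mem ha)) hb))) (hC _ (D.inv_mem hb))

lemma DegreeLE.prod {Z : Type*} [Group Z] [IsMulCommutative Z] [IsAlgClosed k]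
    (h : DegreeLE k G n) : DegreeLE k (G × Z) n := by
  intro d ρ hρ
  refine h d (ρ.comp (.inl G Z)) ?_
  have := nontrivial_of_isIrreducible ρ
  refine isIrreducible_of_invariant fun S hS ↦ eq_bot_or_eq_top_of_invariant ρ S fun x v hv ↦ ?_
  obtain ⟨c, hc⟩ := exists_eq_smul_of_commute ρ (ρ (1, x.2)) fun y v ↦ by
    have hcomm : (1, x.2) * y = y * (1, x.2) := Prod.ext (by simp) (mul_comm' x.2 y.2)
    simp only [← Module.End.mul_apply, ← map_mul, hcomm]
  have hx : ρ x v = c • ρ (x.1, 1) v := by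
    rw [← hc, ← Module.End.mul_apply, ← map_mul, Prod.mk_mul_mk, one_mul, mul_one]
  exact hx ▸ S.smul_mem c (hS x.1 v hv)

lemma DegreeLE.sup_zpowers [IsAlgClosed k] {K : Subgroup G} (h : DegreeLE k K n) {g : G}
    (hg : g ∈ Subgroup.centralizer (K : Set G)) : DegreeLE k ↥(K ⊔ Subgroup.zpowers g) n := by
  have hcomm (x : K) (y : Subgroup.zpowers g) :
      Commute (K.subtype x) ((Subgroup.zpowers g).subtype y) :=
    Subgroup.mem_centralizer_iff.1 (Subgroup.zpowers_le.2 hg y.2) x x.2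
  have hrange : (MonoidHom.noncommCoprod _ _ hcomm).range = K ⊔ Subgroup.zpowers g := by
    rw [MonoidHom.noncommCoprod_range, Subgroup.range_subtype, Subgroup.range_subtype]
  exact hrange ▸ h.prod.of_surjective (MonoidHom.rangeRestrict_surjective _)

variable [CharZero k] [IsAlgClosed k] [Finite G]

lemma DegreeLE.div_two (h : DegreeLE k G n) {K D : Subgroup G} [Group.IsPerfect D]
    (hDK : D ≤ Subgroup.centralizer (K : Set G)) (hD : ¬ D ≤ K) : DegreeLE k K (n / 2) := by
  intro m ρ hρ
  by_contra! hm
  have := nontrivial_of_isIrreducible ρ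
  obtain ⟨w, hw⟩ := exists_ne (0 : Fin m → k)
  refine hD fun d hd ↦ by_contra fun hdK ↦ ?_
  have htop := eq_top_of_forall_isAtom_le (coind K.subtype ρ)
    (LinearMap.ker (coindEval ρ d - coindEval ρ 1)) fun P hP f hf ↦ by
      rw [LinearMap.mem_ker, LinearMap.sub_apply, sub_eq_zero]
      have hdim : finrank k P.toSubmodule < 2 * finrank k (Fin m → k) := by
        have := h.finrank_le_of_isAtom hP
        rw [finrank_fin_fun]
        omega
      have hscalar : ∀ g ∈ D, ∃ c : k, ∀ f ∈ P,
          coindEval ρ 1 (coind K.subtype ρ g f) = c • coindEval ρ 1 f := fun g hg ↦ by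
        simpa only [coindEval_coind, one_mul] using (isSeparating_coindEval_one ρ).exists_eq_smul
          (isTwistedIntertwining_coindEval ρ (one_mem _))
          (isTwistedIntertwining_coindEval ρ (hDK hg)) hP hdim
      have hfix := apply_eq_of_isPerfect hscalar hd hf
      rwa [coindEval_coind, one_mul] at hfix
  obtain ⟨f, hf1, hf⟩ := exists_coindEval_one_eq ρ w
  have hmem : f ∈ LinearMap.ker (coindEval ρ d - coindEval ρ 1) := htop ▸ Submodule.mem_top
  rw [LinearMap.mem_ker, LinearMap.sub_apply, hf d hdK, hf1, zero_sub, neg_eq_zero] at hmem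
  exact hw hmem

lemma subsingleton_of_isPerfect_of_degreeLE_one [Group.IsPerfect G] (h : DegreeLE k G 1) :
    Subsingleton G := by
  by_contra hG
  have hbot := h.div_two (K := ⊥) (D := ⊤) (by simp) fun hle ↦
    hG (Subgroup.subsingleton_iff.1 (subsingleton_of_bot_eq_top (bot_unique hle).symm))
  exact absurd hbot.pos (by decide)

end Perfect

section DegreeTwo

variable {k : Type*} [Field k] {G : Type*} [Group G] {V : Type*} [AddCommGroup V] [Module k V]
  [FiniteDimensional k V]

/-- The traceless endomorphisms of `V`, as a subrepresentation of the conjugation action on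
`End V`. It has degree `3` when `V` has degree `2`. -/
noncomputable def tracelessSubrepresentation (ρ : Representation k G V) :
    Subrepresentation (linHom ρ ρ) where
  toSubmodule := LinearMap.ker (LinearMap.trace k V)
  apply_mem_toSubmodule g A hA := by
    rw [LinearMap.mem_ker] at hA ⊢
    rw [linHom_apply, LinearMap.trace_comp_comm', LinearMap.comp_assoc,
      ← Module.End.mul_eq_comp (ρ g⁻¹), ← map_mul, inv_mul_cancel, map_one]
    exact hA

variable [CharZero k]

lemma finrank_ker_trace_add_one [Nontrivial V] :
    finrank k (LinearMap.ker (LinearMap.trace k V)) + 1 = finrank k V ^ 2 := by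
  have hne : LinearMap.trace k V ≠ 0 := fun h0 ↦ by
    have hid := LinearMap.trace_id k V
    rw [h0, LinearMap.zero_apply] at hid
    exact finrank_pos.ne (Nat.cast_injective (R := k) (by simpa using hid))
  rw [Module.Dual.finrank_ker_add_one_of_ne_zero hne, finrank_linearMap, pow_two]

lemma eq_zero_of_trace_eq_zero_of_commute [IsAlgClosed k] (ρ : Representation k G V)
    [ρ.IsIrreducible] {A : V →ₗ[k] V} (hA : LinearMap.trace k V A = 0)
    (hcomm : ∀ g v, A (ρ g v) = ρ g (A v)) : A = 0 := by
  have := nontrivial_of_isIrreducible ρ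
  obtain ⟨c, hc⟩ := exists_eq_smul_of_commute ρ A hcomm
  obtain rfl : A = c • LinearMap.id := LinearMap.ext hc
  rw [map_smul, LinearMap.trace_id, smul_eq_mul, mul_eq_zero] at hA
  rw [hA.resolve_right (Nat.cast_ne_zero.2 finrank_pos.ne'), zero_smul]

variable [Finite G]

lemma DegreeLE.exists_finrank_eq_one (h : DegreeLE k G 2) {ρ : Representation k G V}
    {S : Subrepresentation ρ} (hS : finrank k S.toSubmodule = 3) :
    ∃ L ≤ S, finrank k L.toSubmodule = 1 := by
  have hS0 : S ≠ ⊥ := by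
    rintro rfl
    exact absurd ((finrank_bot k V).symm.trans hS) (by decide)
  obtain ⟨P, hPS, hP⟩ := exists_isAtom_le ρ hS0
  obtain ⟨Q, hQ⟩ := exists_isCompl P
  have hle := h.finrank_le_of_isAtom hP
  have hpos : finrank k P.toSubmodule ≠ 0 := fun h0 ↦
    hP.1 (Subrepresentation.toSubmodule_injective (Submodule.finrank_eq_zero.1 h0))
  have hsup : P.toSubmodule ⊔ Q.toSubmodule ⊓ S.toSubmodule = S.toSubmodule := by
    have htop : P.toSubmodule ⊔ Q.toSubmodule = ⊤ :=
      congrArg Subrepresentation.toSubmodule hQ.sup_eq_top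
    rw [← sup_inf_assoc_of_le _ (show P.toSubmodule ≤ S.toSubmodule from hPS), htop, top_inf_eq]
  have hinf : P.toSubmodule ⊓ (Q.toSubmodule ⊓ S.toSubmodule) = ⊥ := by
    have hbot : P.toSubmodule ⊓ Q.toSubmodule = ⊥ :=
      congrArg Subrepresentation.toSubmodule hQ.inf_eq_bot
    rw [← inf_assoc, hbot, bot_inf_eq]
  have hsum := Submodule.finrank_sup_add_finrank_inf_eq P.toSubmodule
    (Q.toSubmodule ⊓ S.toSubmodule)
  rw [hsup, hinf, finrank_bot, hS] at hsum
  obtain hP1 | hP2 : finrank k P.toSubmodule = 1 ∨ finrank k P.toSubmodule = 2 := by omega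
  · exact ⟨P, hPS, hP1⟩
  · refine ⟨Q ⊓ S, inf_le_right, ?_⟩
    rw [hP2] at hsum
    exact (Nat.add_left_cancel hsum).symm

lemma DegreeLE.one_of_isPerfect [IsAlgClosed k] [Group.IsPerfect G] (h : DegreeLE k G 2) :
    DegreeLE k G 1 := by
  intro d ρ hρ
  by_contra! hd
  have := nontrivial_of_isIrreducible ρ
  obtain rfl : d = 2 := le_antisymm (h d ρ hρ) hd
  have hS : finrank k (tracelessSubrepresentation ρ).toSubmodule = 3 := by
    have hker := finrank_ker_trace_add_one (k := k) (V := Fin 2 → k)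
    rw [finrank_fin_fun] at hker
    exact Nat.add_right_cancel hker
  obtain ⟨L, hLS, hL⟩ := h.exists_finrank_eq_one hS
  have : Nontrivial L.toSubmodule := Module.nontrivial_of_finrank_eq_succ hL
  obtain ⟨A, hA⟩ := exists_ne (0 : L.toSubmodule)
  refine hA (Subtype.ext (eq_zero_of_trace_eq_zero_of_commute ρ (hLS A.2) fun g v ↦ ?_))
  have hfix := LinearMap.congr_fun (apply_eq_self_of_isPerfect_of_finrank_eq_one hL A.2 g) (ρ g v)
  rw [linHom_apply, LinearMap.comp_apply, LinearMap.comp_apply, inv_self_apply] at hfix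
  exact hfix.symm

end DegreeTwo

section AbelianSubgroup

open scoped Nat

lemma sq_factorial_div_two_mul_le {n : ℕ} (hn : 3 ≤ n) : (n / 2)! ^ 2 * n ^ 4 ≤ 3 * n ! ^ 2 := by
  obtain hn5 | hn5 := lt_or_ge n 5
  · interval_cases n <;> decide
  obtain ⟨m, rfl⟩ : ∃ m, n = m + 3 := ⟨n - 3, by omega⟩
  have hroot : ((m + 3) / 2)! * (m + 3) ^ 2 ≤ (m + 3)! :=
    calc ((m + 3) / 2)! * (m + 3) ^ 2
      _ ≤ m ! * (m + 3) ^ 2 := Nat.mul_le_mul_right _ (Nat.factorial_le (by omega))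
      _ = (m + 3) * m ! * (m + 3) := by ring
      _ ≤ (m + 3) * m ! * ((m + 2) * (m + 1)) := Nat.mul_le_mul_left _ (by nlinarith)
      _ = (m + 3)! := by simp only [Nat.factorial_succ]; ring
  calc ((m + 3) / 2)! ^ 2 * (m + 3) ^ 4
    _ = (((m + 3) / 2)! * (m + 3) ^ 2) ^ 2 := by ring
    _ ≤ (m + 3)! ^ 2 := Nat.pow_le_pow_left hroot 2
    _ ≤ 3 * (m + 3)! ^ 2 := Nat.le_mul_of_pos_left _ (by decide)

variable {G : Type*} [Group G]

lemma exists_isMulCommutative_of_subgroup {K : Subgroup G} {a N : ℕ}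
    (hA : ∃ A : Subgroup K, IsMulCommutative A ∧ A.index ≤ a) (hN : a * K.index ≤ N) :
    ∃ A : Subgroup G, IsMulCommutative A ∧ A.index ≤ N := by
  obtain ⟨A, hA, ha⟩ := hA
  refine ⟨A.map K.subtype, inferInstance, ?_⟩
  rw [Subgroup.index_map_subtype]
  exact (Nat.mul_le_mul_right _ ha).trans hN

variable [Finite G]

lemma three_mul_index_sup_zpowers_le {C : Subgroup G} {g : G} (hg : g ^ 2 ∉ C) :
    3 * (C ⊔ Subgroup.zpowers g).index ≤ C.index := by
  have hgH : g ∈ C ⊔ Subgroup.zpowers g := Subgroup.mem_sup_right (Subgroup.mem_zpowers g)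
  have hindex : C.relIndex (C ⊔ Subgroup.zpowers g) * (C ⊔ Subgroup.zpowers g).index = C.index :=
    Subgroup.relIndex_mul_index le_sup_left
  have h0 : C.relIndex (C ⊔ Subgroup.zpowers g) ≠ 0 := Subgroup.index_ne_zero_of_finite
  have h1 : C.relIndex (C ⊔ Subgroup.zpowers g) ≠ 1 := fun h1 ↦
    hg (C.pow_mem (Subgroup.relIndex_eq_one.1 h1 hgH) 2)
  have h2 : C.relIndex (C ⊔ Subgroup.zpowers g) ≠ 2 := fun h2 ↦
    hg (Subgroup.sq_mem_of_index_two h2 ⟨g, hgH⟩)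
  rw [← hindex]
  exact Nat.mul_le_mul_right _ (by omega)

variable {k : Type*} [Field k] [CharZero k] [IsAlgClosed k] {n : ℕ}

lemma IsRigid.not_commutator_le_centralizer (h : IsRigid k G n) (hG : commutator G ≠ ⊥) :
    ¬ commutator G ≤ Subgroup.centralizer (commutator G : Set G) := by
  have := h.isPerfect_commutator
  rwa [← Subgroup.commutator_eq_bot_iff_le_centralizer, Subgroup.commutator_eq_self]

lemma IsRigid.degreeLE_centralizer_commutator (h : IsRigid k G n) (hG : commutator G ≠ ⊥) :
    DegreeLE k (Subgroup.centralizer (commutator G : Set G)) (n / 2) :=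
  have := h.isPerfect_commutator
  h.degreeLE.div_two (Subgroup.le_centralizer_iff.1 le_rfl) (h.not_commutator_le_centralizer hG)

lemma IsRigid.three_le (h : IsRigid k G n) (hG : commutator G ≠ ⊥) : 3 ≤ n := by
  have := h.isPerfect_commutator
  have hn : n ≠ 2 := by
    rintro rfl
    have := subsingleton_of_isPerfect_of_degreeLE_one
      (h.degreeLE.subgroup (commutator G)).one_of_isPerfect
    exact hG (Subgroup.eq_bot_of_subsingleton _)
  have := (h.degreeLE_centralizer_commutator hG).pos
  omega

lemma IsRigid.exists_subgroup (h : IsRigid k G n) (hG : commutator G ≠ ⊥) :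
    ∃ H : Subgroup G, DegreeLE k H (n / 2) ∧ 3 * H.index ≤ n ^ 4 := by
  have := h.isPerfect_commutator
  obtain ⟨g, hgD, hg⟩ :
      ∃ g ∈ commutator G, g ^ 2 ∉ Subgroup.centralizer (commutator G : Set G) := by
    by_contra! hsq
    exact h.not_commutator_le_centralizer hG (le_of_forall_sq_mem hsq)
  exact ⟨_,
    (h.degreeLE_centralizer_commutator hG).sup_zpowers (Subgroup.le_centralizer_iff.1 le_rfl hgD),
    (three_mul_index_sup_zpowers_le hg).trans h.index_centralizer_commutator_le⟩

theorem DegreeLE.exists_isMulCommutative (h : DegreeLE k G n) :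
    ∃ A : Subgroup G, IsMulCommutative A ∧ A.index ≤ n ! ^ 2 := by
  induction n using Nat.strong_induction_on generalizing G with
  | _ n ih =>
  by_cases hG : commutator G = ⊥
  · refine ⟨⊤, Subgroup.commutator_self_eq_bot_iff.1 hG, ?_⟩
    rw [Subgroup.index_top]
    exact Nat.one_le_pow _ _ n.factorial_pos
  by_cases hrigid : IsRigid k G n
  · have hn := hrigid.three_le hG
    obtain ⟨H, hH, hindex⟩ := hrigid.exists_subgroup hG
    refine exists_isMulCommutative_of_subgroup (ih (n / 2) (by omega) hH) ?_
    refine Nat.le_of_mul_le_mul_left ?_ three_pos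
    calc 3 * ((n / 2)! ^ 2 * H.index)
      _ = (n / 2)! ^ 2 * (3 * H.index) := by ring
      _ ≤ (n / 2)! ^ 2 * n ^ 4 := Nat.mul_le_mul_left _ hindex
      _ ≤ 3 * n ! ^ 2 := sq_factorial_div_two_mul_le hn
  · obtain ⟨K, hK, hdeg⟩ : ∃ K : Subgroup G, K.index ≤ n ^ 2 ∧ DegreeLE k K (n - 1) := by
      by_contra! hno
      exact hrigid ⟨h, hno⟩
    have hn := h.pos
    refine exists_isMulCommutative_of_subgroup (ih (n - 1) (by omega) hdeg) ?_
    calc (n - 1)! ^ 2 * K.index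
      _ ≤ (n - 1)! ^ 2 * n ^ 2 := Nat.mul_le_mul_left _ hK
      _ = n ! ^ 2 := by rw [← mul_pow, mul_comm, Nat.mul_factorial_pred hn.ne']

end AbelianSubgroup

section FDRep

universe u

variable {k : Type u} [Field k] {G : Type*} [Group G]

lemma injective_of_mono {X Y : FDRep k G} (f : X ⟶ Y) [Mono f] :
    Function.Injective f.hom.hom := by
  have : Mono f.hom := inferInstanceAs (Mono ((Action.forget _ _).map f))
  have : Mono f.hom.hom := inferInstanceAs (Mono ((forget₂ _ (ModuleCat k)).map f.hom))
  exact (ModuleCat.mono_iff_injective _).1 this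

lemma isIso_of_bijective {X Y : FDRep k G} {f : X ⟶ Y} (hf : Function.Bijective f.hom.hom) :
    IsIso f := by
  have : IsIso ((forget₂ (FGModuleCat k) (ModuleCat k)).map f.hom) :=
    (ConcreteCategory.isIso_iff_bijective f.hom.hom).2 hf
  have : IsIso f.hom := isIso_of_reflects_iso f.hom (forget₂ (FGModuleCat k) (ModuleCat k))
  exact Action.isIso_of_hom_isIso f

lemma simple_of_isIrreducible {V : Type u} [AddCommGroup V] [Module k V] [FiniteDimensional k V]
    (ρ : Representation k G V) [ρ.IsIrreducible] : Simple (FDRep.of ρ) where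
  mono_isIso_iff_nonzero {X} f _ := by
    have := nontrivial_of_isIrreducible ρ
    constructor
    · rintro hf rfl
      obtain ⟨v, hv⟩ := exists_ne (0 : V)
      have hid : 𝟙 (FDRep.of ρ) = 0 := by
        rw [← IsIso.inv_hom_id (0 : X ⟶ FDRep.of ρ), Limits.comp_zero]
      exact hv (congrArg (fun z : FDRep.of ρ ⟶ FDRep.of ρ ↦ (z.hom.hom v : V)) hid)
    · intro hf
      let A : X.V →ₗ[k] V := f.hom.hom.hom
      have hinv : ∀ g, ∀ v ∈ LinearMap.range A, ρ g v ∈ LinearMap.range A := by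
        rintro g _ ⟨x, rfl⟩
        exact ⟨X.ρ g x, congrArg (fun z ↦ z.hom x) (f.comm g)⟩
      refine isIso_of_bijective ⟨injective_of_mono f, LinearMap.range_eq_top.1
        ((eq_bot_or_eq_top_of_invariant ρ _ hinv).resolve_left fun hbot ↦ hf ?_)⟩
      have hA := LinearMap.range_eq_bot.1 hbot
      ext x
      exact LinearMap.congr_fun hA x

lemma degreeLE_of_forall_simple {n : ℕ} (h : ∀ V : FDRep k G, Simple V → finrank k V ≤ n) :
    DegreeLE k G n :=
  fun _ ρ _ ↦ (finrank_fin_fun k).symm.trans_le (h (FDRep.of ρ) (simple_of_isIrreducible ρ))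

end FDRep

end BoundedDegree

open BoundedDegree in
theorem stmt_5_general {k : Type*} [Field k] [IsAlgClosed k] [CharZero k] (G : Type*) [Group G]
    [Finite G] (r : ℕ) (h : ∀ V : FDRep k G, Simple V → Module.finrank k V ≤ r) :
    ∃ H : Subgroup G, (∀ x ∈ H, ∀ y ∈ H, x * y = y * x) ∧ H.index ≤ (Nat.factorial r) ^ 2 := by
  obtain ⟨H, hcomm, hindex⟩ := (degreeLE_of_forall_simple h).exists_isMulCommutative
  exact ⟨H, fun x hx y hy ↦ congrArg Subtype.val (mul_comm' (⟨x, hx⟩ : H) ⟨y, hy⟩), hindex⟩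

/-- If every irreducible complex representation of a finite group `G` has degree at
most `r`, then `G` has an abelian subgroup of index at most `(r!)²`. -/
theorem stmt_5 (G : Type) [Group G] [Finite G] (r : ℕ)
    (h : ∀ V : FDRep ℂ G, Simple V → Module.finrank ℂ V ≤ r) :
    ∃ H : Subgroup G, (∀ x ∈ H, ∀ y ∈ H, x * y = y * x) ∧
      H.index ≤ (Nat.factorial r) ^ 2 :=
  stmt_5_general G r h
end
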